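/- arXiv:1704.08511 — 2 statements merged into one kernel-verified Lean document; each statement's English description precedes it below -/
import Mathlib

section
/- Let p_1,q_1,…,p_r,q_r be nonnegative integers, h_i=(p_i,1^{q_i}) the associated hooks, and ν=rib(h_1,…,h_r) the ribbon obtained by connecting h_1,…,h_r from top right to bottom left. For each i, let γ_i be the hook tableau of shape h_i with first-row entries α^{(i)}_1,…,α^{(i)}_{p_i} and column entries β^{(i)}_1,…,β^{(i)}_{q_i} (top to bottom), all positive integers, with γ_i∈I_{h_i} except that the condition on β^{(i)}_{q_i} is relaxed to β^{(i)}_{q_i}≥1 for 1≤i≤r−1; let γ=γ_1⊔…⊔γ_r∈I_ν be the concatenated filling. Set A^{(i)}_k=α^{(i)}_{p_i}+α^{(i)}_{p_i−1}+…+α^{(i)}_{p_i+2−k} (so A^{(i)}_1=0), B^{(i)}_l=β^{(i)}_1+…+β^{(i)}_{l−1}, |α_i|=α^{(i)}_1+…+α^{(i)}_{p_i} and |β_i|=β^{(i)}_1+…+β^{(i)}_{q_i}. Then ζ_ν(γ) = ∫_{Δ(γ)} ∏_{i=1}^r [ ∏_{k=1}^{p_i} ( dx^{(i)}_{A^{(i)}_k+1}/(1−x^{(i)}_{A^{(i)}_k+1})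 · ∏_{j=A^{(i)}_k+2}^{A^{(i)}_k+α^{(i)}_{p_i+1−k}} dx^{(i)}_j/x^{(i)}_j ) · ∏_{l=1}^{q_i} ( dy^{(i)}_{B^{(i)}_l+1}/(1−y^{(i)}_{B^{(i)}_l+1}) · ∏_{j=B^{(i)}_l+2}^{B^{(i)}_l+β^{(i)}_l} dy^{(i)}_j/y^{(i)}_j ) ], where Δ(γ)⊆[0,1]^{Σ_i(|α_i|+|β_i|)} consists of the tuples (x_1,y_1,…,x_r,y_r) satisfying: for each i, x^{(i)}_j<x^{(i)}_{j+1} unless j∈{α^{(i)}_{p_i}, α^{(i)}_{p_i}+α^{(i)}_{p_i−1}, …, α^{(i)}_{p_i}+…+α^{(i)}_2}, in which case x^{(i)}_j>x^{(i)}_{j+1}; y^{(i)}_1<y^{(i)}_2<…<y^{(i)}_{|β_i|}; x^{(i)}_{|α_i|}<y^{(i)}_1 if q_i≠0 and x^{(i)}_{|α_i|}<x^{(i+1)}_1 if q_i=0; and y^{(i)}_{|β_i|}<x^{(i+1)}_1 for 1≤i≤r−1. -/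
/-!
The ribbon is a path of boxes, running through each hook along its row from right to left and then
down its column, and the integration variables form a chain in which every box with exponent `s`
contributes `s` consecutive variables: one with the form `dt/(1-t)`, followed by `s - 1` with
the form `dt/t`.  Integrating out the variables one at a time, starting at the upper right end of
the ribbon, keeps the partial integral a power series `∑ c_a s^a` in the current variable `s`.  With
`t` the next variable, the monomial `s^a` produces the factor `1/(a+1)` and becomes

* `t^a` if `s < t` and `t` carries `dt/t`: the summation index is kept;
* `∑_{b > a} t^b` if `s < t` and `t` carries `dt/(1-t)`: a strict inequality, one step down a
  column;
* `∑_{b ≤ a} t^b` if `t < s` and `t` carries `dt/(1-t)`: a weak inequality, one step to the left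
  in a row.

This is `lintegral_ser_mul_ker`; by induction (`chain_integral`, `chain_integral_enum`) the whole
integral is a sum over chains of indices subject to these relations, with weight `∏ 1/(a_v + 1)`.
`adj_iff` identifies the inequalities defining `Δ(γ)` with those between neighbours in the chain,
`tableaux_bijective` identifies the chains of indices with semistandard tableaux on the ribbon
(all variables of a box carry the same index, which is the entry of the box minus one), and
`prod_box` matches the weights.

All terms are nonnegative, so the computation takes place in `ENNReal`, where sums and integrals
may be exchanged freely; the passage to the Bochner integral and to the complex series is `toReal`
on both sides.
-/

open scoped BigOperators

noncomputable section

namespace SMZ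

/-- Box `(i,j)` (0-indexed) lies in the Young diagram of the partition `lam`. -/
def InDiag (lam : ℕ → ℕ) (p : ℕ × ℕ) : Prop := p.2 < lam p.1

/-- `(i,j)` is a corner of the Young diagram of `lam`. -/
def IsCorner (lam : ℕ → ℕ) (p : ℕ × ℕ) : Prop :=
  InDiag lam p ∧ ¬ InDiag lam (p.1 + 1, p.2) ∧ ¬ InDiag lam (p.1, p.2 + 1)

/-- `lam` is the part function of a partition with exactly `r` positive parts. -/
def IsPartitionWith (r : ℕ) (lam : ℕ → ℕ) : Prop :=
  Antitone lam ∧ ∀ i, 0 < lam i ↔ i < r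

/-- Semi-standard Young tableau of shape `lam`, normalized to be `0` off the diagram. -/
structure IsSSYT (lam : ℕ → ℕ) (m : ℕ × ℕ → ℕ) : Prop where
  zero_off : ∀ p, ¬ InDiag lam p → m p = 0
  pos : ∀ p, InDiag lam p → 0 < m p
  row_le : ∀ i j, InDiag lam (i, j + 1) → m (i, j) ≤ m (i, j + 1)
  col_lt : ∀ i j, InDiag lam (i + 1, j) → m (i, j) < m (i + 1, j)

/-- The summand `1 / M^s` of the Schur multiple zeta series. -/
def term (r : ℕ) (lam : ℕ → ℕ) (s : ℕ × ℕ → ℂ) (m : ℕ × ℕ → ℕ) : ℂ :=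
  ∏ i ∈ Finset.range r, ∏ j ∈ Finset.range (lam i), (m (i, j) : ℂ) ^ (-(s (i, j)))

/-- The Schur multiple zeta function `ζ_λ(s)`. -/
def schurZeta (r : ℕ) (lam : ℕ → ℕ) (s : ℕ × ℕ → ℂ) : ℂ :=
  ∑' M : {m : ℕ × ℕ → ℕ // IsSSYT lam m}, term r lam s M.1

/-- The region `W_λ` of (sufficient) absolute convergence. -/
def MemW (lam : ℕ → ℕ) (s : ℕ × ℕ → ℂ) : Prop :=
  (∀ p, InDiag lam p → 1 ≤ (s p).re) ∧ ∀ p, IsCorner lam p → 1 < (s p).re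

/-- Euler–Zagier multiple zeta function. -/
def mzv {n : ℕ} (s : Fin n → ℂ) : ℂ :=
  ∑' f : {f : Fin n → ℕ // StrictMono f ∧ ∀ i, 0 < f i},
    ∏ i, (f.1 i : ℂ) ^ (-(s i))

/-- Euler–Zagier multiple zeta-star function. -/
def mzvStar {n : ℕ} (s : Fin n → ℂ) : ℂ :=
  ∑' f : {f : Fin n → ℕ // Monotone f ∧ ∀ i, 0 < f i},
    ∏ i, (f.1 i : ℂ) ^ (-(s i))

/-- `ζ⋆(a start, a (start+1), …)` with `len` terms; `1` if `len = 0`, `0` if `len < 0`. -/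
def mzvStarSeq (a : ℤ → ℂ) (start len : ℤ) : ℂ :=
  if len < 0 then 0 else mzvStar fun i : Fin len.toNat => a (start + (i : ℕ))

/-- `ζ(a start, a (start-1), …)` with `len` terms; `1` if `len = 0`, `0` if `len < 0`. -/
def mzvSeqDesc (a : ℤ → ℂ) (start len : ℤ) : ℂ :=
  if len < 0 then 0 else mzv fun i : Fin len.toNat => a (start - (i : ℕ))

/-- The conjugate partition: `conjPart r lam c` is the number of rows `i < r` with a box
in column `c`, i.e. the (0-indexed) `c`-th part of `λ'`. -/
def conjPart (r : ℕ) (lam : ℕ → ℕ) (c : ℕ) : ℕ :=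
  ((Finset.range r).filter fun i => c < lam i).card

end SMZ
namespace SMZ

/-- Semi-standard Young tableau on an arbitrary finite diagram `D` (intended: a skew
diagram), normalized to be `0` off `D`. -/
structure IsSSYTOn (D : Finset (ℕ × ℕ)) (m : ℕ × ℕ → ℕ) : Prop where
  zero_off : ∀ p, p ∉ D → m p = 0
  pos : ∀ p ∈ D, 0 < m p
  row_le : ∀ i j, (i, j) ∈ D → (i, j + 1) ∈ D → m (i, j) ≤ m (i, j + 1)
  col_lt : ∀ i j, (i, j) ∈ D → (i + 1, j) ∈ D → m (i, j) < m (i + 1, j)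

/-- The Schur multiple zeta value of the diagram `D` with variables `s`. -/
def schurZetaOn (D : Finset (ℕ × ℕ)) (s : ℕ × ℕ → ℂ) : ℂ :=
  ∑' M : {m : ℕ × ℕ → ℕ // IsSSYTOn D m}, ∏ b ∈ D, (M.1 b : ℂ) ^ (-(s b))

end SMZ
open MeasureTheory

namespace SMZ

/-- The (0-indexed) row of the horizontal segment of the `i`-th hook of the ribbon
`rib(p_1,q_1 | … | p_r,q_r)` (hooks connected from the top right to the bottom left). -/
def ribRow (q : ℕ → ℕ) (i : ℕ) : ℕ := i + ∑ k ∈ Finset.range i, q k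

/-- The (0-indexed) column of the leftmost box of the `i`-th hook of the ribbon. -/
def ribCol (r : ℕ) (p : ℕ → ℕ) (i : ℕ) : ℕ := ∑ k ∈ Finset.Ico (i + 1) r, (p k - 1)

/-- The set of boxes of the ribbon `rib(p_1,q_1 | … | p_r,q_r)`: the `i`-th hook consists
of a row of `p i` boxes and a column of `q i` boxes hanging below its leftmost box. -/
def ribbonDiag (r : ℕ) (p q : ℕ → ℕ) : Finset (ℕ × ℕ) :=
  (Finset.range r).biUnion fun i =>
    ((Finset.range (p i)).image fun c => (ribRow q i, ribCol r p i + c)) ∪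
      ((Finset.range (q i)).image fun d => (ribRow q i + 1 + d, ribCol r p i))

/-- `|α_i| = α^{(i)}_1 + ⋯ + α^{(i)}_{p_i}`, the number of `x`-variables of block `i`. -/
def aSize (p : ℕ → ℕ) (α : ℕ → ℕ → ℕ) (i : ℕ) : ℕ := ∑ k ∈ Finset.range (p i), α i k

/-- `|β_i| = β^{(i)}_1 + ⋯ + β^{(i)}_{q_i}`, the number of `y`-variables of block `i`. -/
def bSize (q : ℕ → ℕ) (β : ℕ → ℕ → ℕ) (i : ℕ) : ℕ := ∑ k ∈ Finset.range (q i), β i k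

/-- `A^{(i)}_{k+1} = α^{(i)}_{p_i} + ⋯ + α^{(i)}_{p_i+1-k}` (partial sums of reversed `α`). -/
def aPartial (p : ℕ → ℕ) (α : ℕ → ℕ → ℕ) (i k : ℕ) : ℕ :=
  ∑ t ∈ Finset.range k, α i (p i - 1 - t)

/-- `B^{(i)}_{l+1} = β^{(i)}_1 + ⋯ + β^{(i)}_l` (partial sums of `β`). -/
def bPartial (β : ℕ → ℕ → ℕ) (i l : ℕ) : ℕ := ∑ t ∈ Finset.range l, β i t

/-- The integrand factor attached to each integration variable: `1/(1-t)` at the variables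
`x^{(i)}_{A^{(i)}_k+1}` and `y^{(i)}_{B^{(i)}_l+1}`, and `1/t` at all other variables. -/
def ribFactor (r : ℕ) (p q : ℕ → ℕ) (α β : ℕ → ℕ → ℕ) :
    (Σ i : Fin r, (Fin (aSize p α i) ⊕ Fin (bSize q β i))) → ℝ → ℝ
  | ⟨i, Sum.inl u⟩, t =>
      if (u : ℕ) ∈ (Finset.range (p i)).image (aPartial p α i) then 1 / (1 - t) else 1 / t
  | ⟨i, Sum.inr u⟩, t =>
      if (u : ℕ) ∈ (Finset.range (q i)).image (bPartial β i) then 1 / (1 - t) else 1 / t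

/-- The region `Δ(γ) ⊆ [0,1]^{Σ_i (|α_i|+|β_i|)}`: within each block the `x`-variables
satisfy `P_{α_i}` (increasing except for a descent after each `A^{(i)}_k`), the
`y`-variables are increasing, `x^{(i)}_{|α_i|} < y^{(i)}_1` (if `q_i ≠ 0`),
`x^{(i)}_{|α_i|} < x^{(i+1)}_1` (if `q_i = 0`), and `y^{(i)}_{|β_i|} < x^{(i+1)}_1`. -/
def ribRegion (r : ℕ) (p q : ℕ → ℕ) (α β : ℕ → ℕ → ℕ) :
    Set ((Σ i : Fin r, (Fin (aSize p α i) ⊕ Fin (bSize q β i))) → ℝ) :=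
  {z |
    (∀ v, 0 ≤ z v ∧ z v ≤ 1) ∧
    (∀ (i : Fin r) (t : ℕ) (h : t + 1 < aSize p α i),
      if (t + 1) ∈ (Finset.Ico 1 (p i)).image (aPartial p α i)
      then z ⟨i, Sum.inl ⟨t + 1, h⟩⟩ < z ⟨i, Sum.inl ⟨t, Nat.lt_of_succ_lt h⟩⟩
      else z ⟨i, Sum.inl ⟨t, Nat.lt_of_succ_lt h⟩⟩ < z ⟨i, Sum.inl ⟨t + 1, h⟩⟩) ∧
    (∀ (i : Fin r) (t : ℕ) (h : t + 1 < bSize q β i),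
      z ⟨i, Sum.inr ⟨t, Nat.lt_of_succ_lt h⟩⟩ < z ⟨i, Sum.inr ⟨t + 1, h⟩⟩) ∧
    (∀ (i : Fin r), 0 < q i → ∀ (hA : 0 < aSize p α i) (hB : 0 < bSize q β i),
      z ⟨i, Sum.inl ⟨aSize p α i - 1, Nat.sub_lt hA one_pos⟩⟩ < z ⟨i, Sum.inr ⟨0, hB⟩⟩) ∧
    (∀ (i : Fin r) (hi : (i : ℕ) + 1 < r), q i = 0 →
      ∀ (hA : 0 < aSize p α i) (hA' : 0 < aSize p α ((i : ℕ) + 1)),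
      z ⟨i, Sum.inl ⟨aSize p α i - 1, Nat.sub_lt hA one_pos⟩⟩
        < z ⟨⟨(i : ℕ) + 1, hi⟩, Sum.inl ⟨0, hA'⟩⟩) ∧
    (∀ (i : Fin r) (hi : (i : ℕ) + 1 < r) (hB : 0 < bSize q β i)
        (hA' : 0 < aSize p α ((i : ℕ) + 1)),
      z ⟨i, Sum.inr ⟨bSize q β i - 1, Nat.sub_lt hB one_pos⟩⟩
        < z ⟨⟨(i : ℕ) + 1, hi⟩, Sum.inl ⟨0, hA'⟩⟩)}

end SMZ

namespace RibbonChain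

/-! ### Transfer operators on power series -/

/-- The order relation between the values of a chain of summation indices that matches a
differential form: `o` says whether the form is `dt/(1-t)` (as opposed to `dt/t`), `d` whether
the variable is a descent with respect to its predecessor. -/
def relQ (o d : Bool) (a b : ℕ) : Prop :=
  if o then (if d then b ≤ a else a < b) else a = b

instance (o d : Bool) (a b : ℕ) : Decidable (relQ o d a b) := by
  unfold relQ; infer_instance

/-- The order relation between consecutive integration variables. -/
def relR (d : Bool) (s t : ℝ) : Prop := if d then t < s else s < t

instance (d : Bool) (s t : ℝ) : Decidable (relR d s t) := Classical.dec _

/-- The integration kernel: the form `dt/(1-t)` or `dt/t` on `(0,1)`, cut off to the region where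
`t` is in the prescribed position relative to its predecessor `s`. -/
def ker (o d : Bool) (s t : ℝ) : ENNReal :=
  if 0 < t ∧ t < 1 ∧ relR d s t then ENNReal.ofReal (if o then 1 / (1 - t) else 1 / t) else 0

/-- The discrete kernel matching `ker`; indices are shifted by one, so that `b : ℕ` stands for
the positive integer `b + 1`. -/
def disc (o d : Bool) (a b : ℕ) : ENNReal :=
  if relQ o d a b then ((b : ENNReal) + 1)⁻¹ else 0

/-- The power series with coefficients `c` on the open unit interval, extended by zero. -/
def ser (c : ℕ → ENNReal) (t : ℝ) : ENNReal :=
  if 0 < t ∧ t < 1 then ∑' a, c a * ENNReal.ofReal t ^ a else 0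

lemma measurable_ser (c : ℕ → ENNReal) : Measurable (ser c) := by
  unfold ser
  refine Measurable.ite ?_ ?_ measurable_const
  · exact (measurableSet_Ioo : MeasurableSet (Set.Ioo (0:ℝ) 1))
  · fun_prop

lemma measurable_ker (o d : Bool) : Measurable (fun x : ℝ × ℝ => ker o d x.1 x.2) := by
  unfold ker
  refine Measurable.ite ?_ ?_ measurable_const
  · refine MeasurableSet.inter (measurableSet_lt measurable_const measurable_snd) ?_
    refine MeasurableSet.inter (measurableSet_lt measurable_snd measurable_const) ?_
    cases d
    · exact measurableSet_lt (measurable_fst : Measurable (fun x : ℝ × ℝ => x.1)) measurable_snd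
    · exact measurableSet_lt (measurable_snd : Measurable (fun x : ℝ × ℝ => x.2)) measurable_fst
  · cases o
    · simp only [Bool.false_eq_true, if_false]; fun_prop
    · simp only [if_true]; fun_prop

lemma lintegral_Ioo_pow {a b : ℝ} (ha : 0 ≤ a) (hab : a ≤ b) (n : ℕ) :
    ∫⁻ s in Set.Ioo a b, ENNReal.ofReal s ^ n =
      ENNReal.ofReal ((b ^ (n + 1) - a ^ (n + 1)) / (n + 1)) := by
  rw [← integral_pow, intervalIntegral.integral_of_le hab, integral_Ioc_eq_integral_Ioo,
    ofReal_integral_eq_lintegral_ofReal]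
  · refine setLIntegral_congr_fun measurableSet_Ioo fun s hs => ?_
    exact (ENNReal.ofReal_pow (ha.trans hs.1.le) n).symm
  · have := (intervalIntegral.intervalIntegrable_pow (a := a) (b := b) (μ := volume) n)
    rw [intervalIntegrable_iff_integrableOn_Ioo_of_le hab] at this
    exact this
  · filter_upwards [ae_restrict_mem measurableSet_Ioo] with s hs
    exact pow_nonneg (ha.trans hs.1.le) n

/-- The monomial case of `lintegral_ser_mul_ker`, after integration of `s ^ a` over the part of
the unit interval allowed by the relation to `t`. -/
lemma monomial_step {o d : Bool} (hod : d = true → o = true) {t : ℝ} (h0 : 0 < t) (h1 : t < 1)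
    (a : ℕ) :
    ENNReal.ofReal ((if d then 1 - t ^ (a + 1) else t ^ (a + 1)) / (a + 1)) *
        ENNReal.ofReal (if o then 1 / (1 - t) else 1 / t) =
      ∑' b, ((a : ENNReal) + 1)⁻¹ * (if relQ o d a b then 1 else 0) * ENNReal.ofReal t ^ b := by
  have hinv : ((a : ENNReal) + 1)⁻¹ = ENNReal.ofReal ((a + 1 : ℝ)⁻¹) := by
    rw [ENNReal.ofReal_inv_of_pos (by positivity), ENNReal.ofReal_add (by positivity) zero_le_one]
    simp
  have h1t : 0 < 1 - t := by linarith
  simp_rw [mul_assoc]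
  rw [ENNReal.tsum_mul_left, hinv]
  cases d
  · cases o
    · rw [tsum_eq_single a (by intro b hb; simp [relQ, hb.symm])]
      simp only [Bool.false_eq_true, if_false, relQ, if_true, one_mul]
      rw [← ENNReal.ofReal_pow h0.le, ← ENNReal.ofReal_mul (by positivity),
        ← ENNReal.ofReal_mul (by positivity)]
      congr 1
      field_simp
      ring
    · have : ∀ b, (if relQ true false a b then (1 : ENNReal) else 0) * ENNReal.ofReal t ^ b =
          if a < b then ENNReal.ofReal t ^ b else 0 := by
        intro b; simp [relQ]
      simp_rw [this]
      rw [← Summable.sum_add_tsum_nat_add' (k := a + 1) ENNReal.summable, Finset.sum_eq_zero, zero_add]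
      · have : ∀ i, (if a < i + (a + 1) then ENNReal.ofReal t ^ (i + (a + 1)) else 0) =
            ENNReal.ofReal t ^ (a + 1) * ENNReal.ofReal t ^ i := by
          intro i; rw [if_pos (by omega), pow_add, mul_comm]
        simp_rw [this]
        rw [ENNReal.tsum_mul_left, ENNReal.tsum_geometric]
        have : (1 - ENNReal.ofReal t)⁻¹ = ENNReal.ofReal (1 / (1 - t)) := by
          rw [one_div, ENNReal.ofReal_inv_of_pos h1t, ENNReal.ofReal_sub _ h0.le, ENNReal.ofReal_one]
        simp only [Bool.false_eq_true, if_false, if_true]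
        rw [this, ← ENNReal.ofReal_pow h0.le,
          ← ENNReal.ofReal_mul (p := t ^ (a + 1)) (by positivity),
          ← ENNReal.ofReal_mul (p := t ^ (a + 1) / (a + 1)) (by positivity),
          ← ENNReal.ofReal_mul (p := (a + 1 : ℝ)⁻¹) (by positivity)]
        congr 1
        field_simp
      · intro i hi
        rw [if_neg]
        have := Finset.mem_range.1 hi
        omega
  · have ho := hod rfl
    subst ho
    have : ∀ b, (if relQ true true a b then (1 : ENNReal) else 0) * ENNReal.ofReal t ^ b =
          if b ≤ a then ENNReal.ofReal t ^ b else 0 := by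
        intro b; simp [relQ]
    simp_rw [this]
    rw [tsum_eq_sum (s := Finset.range (a + 1))
      (by intro b hb; rw [if_neg]; simpa [Nat.lt_succ_iff] using hb)]
    have : ∑ b ∈ Finset.range (a + 1), (if b ≤ a then ENNReal.ofReal t ^ b else 0) =
        ENNReal.ofReal (∑ b ∈ Finset.range (a + 1), t ^ b) := by
      rw [ENNReal.ofReal_sum_of_nonneg (fun i _ => by positivity)]
      refine Finset.sum_congr rfl fun b hb => ?_
      rw [if_pos (by have := Finset.mem_range.1 hb; omega), ENNReal.ofReal_pow h0.le]
    rw [this, geom_sum_eq h1.ne]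
    simp only [if_true]
    have hp : t ^ (a + 1) ≤ 1 := pow_le_one₀ h0.le h1.le
    rw [← ENNReal.ofReal_mul (p := (1 - t ^ (a + 1)) / (a + 1))
        (div_nonneg (by linarith) (by positivity)),
      ← ENNReal.ofReal_mul (p := (a + 1 : ℝ)⁻¹) (by positivity)]
    congr 1
    have : t - 1 ≠ 0 := by linarith
    field_simp
    ring

/-- One step of iterated integration: integrating a power series against `ker` gives the power
series whose coefficients are transformed by the matching discrete relation. -/
lemma lintegral_ser_mul_ker {o d : Bool} (hod : d = true → o = true) (c : ℕ → ENNReal) (t : ℝ) :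
    ∫⁻ s, ser c s * ker o d s t =
      ser (fun b => ∑' a, c a * ((a : ENNReal) + 1)⁻¹ * (if relQ o d a b then 1 else 0)) t := by
  by_cases ht : 0 < t ∧ t < 1
  swap
  · have : ∀ s, ser c s * ker o d s t = 0 := by
      intro s
      rw [ker, if_neg (by tauto), mul_zero]
    simp_rw [this]
    rw [ser, if_neg ht]
    simp
  obtain ⟨h0, h1⟩ := ht
  set F : ENNReal := ENNReal.ofReal (if o then 1 / (1 - t) else 1 / t) with hF
  set lo : ℝ := if d then t else 0 with hlo
  set hi : ℝ := if d then 1 else t with hhi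
  have hpt : ∀ s, ser c s * ker o d s t =
      (Set.Ioo lo hi).indicator (fun s => ∑' a, c a * (ENNReal.ofReal s ^ a * F)) s := by
    intro s
    by_cases hs : s ∈ Set.Ioo lo hi
    · rw [Set.indicator_of_mem hs]
      have hs' : (0 < s ∧ s < 1) ∧ relR d s t := by
        cases d
        · simp [hlo, hhi] at hs
          simp [relR]
          exact ⟨⟨hs.1, hs.2.trans h1⟩, hs.2⟩
        · simp [hlo, hhi] at hs
          simp [relR]
          exact ⟨⟨h0.trans hs.1, hs.2⟩, hs.1⟩
      rw [ser, if_pos hs'.1, ker, if_pos ⟨h0, h1, hs'.2⟩, ← ENNReal.tsum_mul_right]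
      simp_rw [mul_assoc]
      rfl
    · rw [Set.indicator_of_notMem hs]
      by_cases h : (0 < s ∧ s < 1)
      · have : ¬ relR d s t := by
          intro hr
          apply hs
          cases d
          · simp [relR] at hr
            simp [hlo, hhi]; exact ⟨h.1, hr⟩
          · simp [relR] at hr
            simp [hlo, hhi]; exact ⟨hr, h.2⟩
        rw [ker, if_neg (by tauto), mul_zero]
      · rw [ser, if_neg h, zero_mul]
  simp_rw [hpt]
  rw [lintegral_indicator measurableSet_Ioo, lintegral_tsum (fun a => by fun_prop)]
  rw [ser, if_pos ⟨h0, h1⟩]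
  have key : ∀ a, ∫⁻ s in Set.Ioo lo hi, c a * (ENNReal.ofReal s ^ a * F) =
      c a * ∑' b, ((a : ENNReal) + 1)⁻¹ * (if relQ o d a b then 1 else 0) *
        ENNReal.ofReal t ^ b := by
    intro a
    rw [lintegral_const_mul _ (by fun_prop), lintegral_mul_const _ (by fun_prop),
      lintegral_Ioo_pow, ← monomial_step hod h0 h1]
    · congr 4
      cases d <;> simp [hlo, hhi]
    · cases d <;> simp [hlo, h0.le]
    · cases d <;> simp [hlo, hhi, h0.le, h1.le]
  simp_rw [key, ← ENNReal.tsum_mul_left, ← ENNReal.tsum_mul_right]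
  rw [ENNReal.tsum_comm]
  refine tsum_congr fun b => tsum_congr fun a => ?_
  ring

/-! ### Iterated integrals along a chain -/

/-- An iterated integral along a chain of variables equals the multiple sum along the matching
chain of summation indices.  The first variable carries an arbitrary power series, which makes
the statement amenable to induction: integrating out the first variable replaces the series. -/
theorem chain_integral (N : ℕ) : ∀ (c : ℕ → ENNReal) (o d : Fin N → Bool),
    (∀ n, d n = true → o n = true) →
    ∫⁻ z : Fin (N + 1) → ℝ, ser c (z 0) * ∏ n, ker (o n) (d n) (z n.castSucc) (z n.succ) =
      ∑' M : Fin (N + 1) → ℕ, c (M 0) * ((M 0 : ENNReal) + 1)⁻¹ *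
        ∏ n, disc (o n) (d n) (M n.castSucc) (M n.succ) := by
  induction N with
  | zero =>
    intro c o d _
    simp only [Finset.univ_eq_empty, Finset.prod_empty, mul_one]
    have e1 : ∫⁻ z : Fin 1 → ℝ, ser c (z 0) = ∫⁻ s, ser c s := by
      convert (volume_preserving_funUnique (Fin 1) ℝ).lintegral_comp (measurable_ser c)
      rfl
    have e2 := (Equiv.funUnique (Fin 1) ℕ).tsum_eq (fun a => c a * ((a : ENNReal) + 1)⁻¹)
    simp only [Equiv.funUnique_apply, Fin.default_eq_zero] at e2
    change ∫⁻ z : Fin 1 → ℝ, ser c (z 0) = ∑' M : Fin 1 → ℕ, c (M 0) * ((M 0 : ENNReal) + 1)⁻¹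
    rw [e1, e2]
    have : ∀ s, ser c s = (Set.Ioo (0:ℝ) 1).indicator (fun s => ∑' a, c a * ENNReal.ofReal s ^ a) s := by
      intro s; simp [ser, Set.indicator_apply]
    simp_rw [this]
    rw [lintegral_indicator measurableSet_Ioo, lintegral_tsum (fun a => by fun_prop)]
    refine tsum_congr fun a => ?_
    rw [lintegral_const_mul _ (by fun_prop), lintegral_Ioo_pow le_rfl zero_le_one]
    congr 1
    rw [← one_div, one_pow, zero_pow (by omega), sub_zero, one_div,
      ENNReal.ofReal_inv_of_pos (by positivity), ENNReal.ofReal_add (by positivity) zero_le_one]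
    simp
  | succ N ih =>
    intro c o d hod
    set G : (Fin (N + 1) → ℝ) → ENNReal := fun z =>
      ∏ n : Fin N, ker (o n.succ) (d n.succ) (z n.castSucc) (z n.succ) with hG
    have hGm : Measurable G := by
      refine Finset.measurable_prod _ fun n _ => ?_
      have hm : Measurable fun z : Fin (N + 1) → ℝ => (z n.castSucc, z n.succ) := by fun_prop
      exact (measurable_ker (o n.succ) (d n.succ)).comp hm
    set H : ℝ × (Fin (N + 1) → ℝ) → ENNReal := fun x =>
      ser c x.1 * ker (o 0) (d 0) x.1 (x.2 0) * G x.2 with hH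
    have hHm : Measurable H := by
      refine Measurable.mul (Measurable.mul ((measurable_ser c).comp measurable_fst) ?_)
        (hGm.comp measurable_snd)
      exact (measurable_ker _ _).comp
        (measurable_fst.prodMk ((measurable_pi_apply 0).comp measurable_snd))
    have e1 := (volume_preserving_piFinSuccAbove (fun _ : Fin (N + 2) => ℝ) 0).lintegral_comp hHm
    have e2 : ∀ z : Fin (N + 2) → ℝ,
        ser c (z 0) * ∏ n, ker (o n) (d n) (z n.castSucc) (z n.succ) =
          H (MeasurableEquiv.piFinSuccAbove (fun _ : Fin (N + 2) => ℝ) 0 z) := by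
      intro z
      rw [Fin.prod_univ_succ, ← mul_assoc]
      rfl
    simp_rw [e2]
    rw [e1]
    change ∫⁻ x, H x ∂(volume.prod volume) = _
    rw [lintegral_prod_symm _ hHm.aemeasurable]
    have e3 : ∀ y : Fin (N + 1) → ℝ, ∫⁻ s, H (s, y) =
        ser (fun b => ∑' a, c a * ((a : ENNReal) + 1)⁻¹ * (if relQ (o 0) (d 0) a b then 1 else 0))
          (y 0) * G y := by
      intro y
      rw [← lintegral_ser_mul_ker (hod 0), ← lintegral_mul_const]
      exact (measurable_ser c).mul ((measurable_ker _ _).comp (measurable_id.prodMk measurable_const))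
    simp_rw [e3, hG]
    rw [ih _ (fun n => o n.succ) (fun n => d n.succ) (fun n => hod n.succ)]
    rw [← (Fin.consEquiv (fun _ : Fin (N + 2) => ℕ)).tsum_eq, ENNReal.tsum_prod', ENNReal.tsum_comm]
    refine tsum_congr fun M => ?_
    simp_rw [← ENNReal.tsum_mul_right]
    refine tsum_congr fun a => ?_
    rw [Fin.prod_univ_succ]
    simp only [Fin.consEquiv_apply, Fin.cons_zero, Fin.castSucc_zero, Fin.cons_succ, disc,
      ← Fin.succ_castSucc]
    split_ifs
    · ring
    · simp

end RibbonChain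

namespace RibbonChain

/-- `chain_integral` with the variables indexed by an arbitrary type enumerated by `e`, with a
Bochner integral over the closed unit cube.  No convergence hypothesis is needed: if the sum is
infinite, both sides are `0` by convention. -/
theorem chain_integral_enum {V : Type*} [Fintype V] {N : ℕ} (e : Fin (N + 1) ≃ V)
    (o d : V → Bool) (hod : ∀ v, d v = true → o v = true) (h0 : o (e 0) = true)
    (Rg : Set (V → ℝ))
    (hRg : ∀ z, z ∈ Rg ↔ (∀ v, 0 ≤ z v ∧ z v ≤ 1) ∧
      ∀ n : Fin N, relR (d (e n.succ)) (z (e n.castSucc)) (z (e n.succ)))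
    (f : V → ℝ → ℝ) (hf : ∀ v t, f v t = if o v then 1 / (1 - t) else 1 / t) :
    ∫ z in Rg, ∏ v, f v (z v) =
      (∑' M : {M : V → ℕ // ∀ n : Fin N,
          relQ (o (e n.succ)) (d (e n.succ)) (M (e n.castSucc)) (M (e n.succ))},
        ∏ v, ((M.1 v : ENNReal) + 1)⁻¹).toReal := by
  have hfm : ∀ v, Measurable (f v) := by
    intro v
    have : f v = fun t => if o v then 1 / (1 - t) else 1 / t := funext (hf v)
    rw [this]
    cases o v
    · simp only [Bool.false_eq_true, if_false]; fun_prop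
    · simp only [if_true]; fun_prop
  have hfm' : Measurable fun z : V → ℝ => ∏ v, f v (z v) :=
    Finset.measurable_prod _ fun v _ => (hfm v).comp (measurable_pi_apply v)
  have hRgm : MeasurableSet Rg := by
    have : Rg = (⋂ v, {z : V → ℝ | 0 ≤ z v ∧ z v ≤ 1}) ∩
        ⋂ n : Fin N, {z : V → ℝ | relR (d (e n.succ)) (z (e n.castSucc)) (z (e n.succ))} := by
      ext z
      simp [hRg]
    rw [this]
    refine MeasurableSet.inter (MeasurableSet.iInter fun v => ?_) (MeasurableSet.iInter fun n => ?_)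
    · exact (measurableSet_le measurable_const (measurable_pi_apply v)).inter
        (measurableSet_le (measurable_pi_apply v) measurable_const)
    · cases d (e n.succ)
      · exact measurableSet_lt (measurable_pi_apply (e n.castSucc)) (measurable_pi_apply (e n.succ))
      · exact measurableSet_lt (measurable_pi_apply (e n.succ)) (measurable_pi_apply (e n.castSucc))
  have hf0 : ∀ v t, 0 ≤ t → t ≤ 1 → 0 ≤ f v t := by
    intro v t h0 h1
    rw [hf]
    have : 0 ≤ 1 - t := by linarith
    split_ifs <;> positivity
  rw [integral_eq_lintegral_of_nonneg_ae _ hfm'.aestronglyMeasurable]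
  swap
  · filter_upwards [ae_restrict_mem hRgm] with z hz
    rw [hRg] at hz
    exact Finset.prod_nonneg fun v _ => hf0 v _ (hz.1 v).1 (hz.1 v).2
  congr 1
  rw [← lintegral_indicator hRgm]
  have mp := volume_measurePreserving_piCongrLeft (fun _ : V => ℝ) e
  rw [← mp.lintegral_comp (hfm'.ennreal_ofReal.indicator hRgm)]
  have hval : ∀ (z : Fin (N + 1) → ℝ) n,
      (MeasurableEquiv.piCongrLeft (fun _ : V => ℝ) e) z (e n) = z n := by
    intro z n
    rw [MeasurableEquiv.coe_piCongrLeft]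
    exact Equiv.piCongrLeft_apply_apply (fun _ : V => ℝ) e z n
  have hae : ∀ᵐ z : Fin (N + 1) → ℝ, ∀ n, z n ≠ 0 ∧ z n ≠ 1 := by
    rw [ae_all_iff]
    intro n
    exact (Measure.ae_eval_ne (fun _ : Fin (N + 1) => (volume : Measure ℝ)) n 0).and
      (Measure.ae_eval_ne (fun _ : Fin (N + 1) => (volume : Measure ℝ)) n 1)
  have hcongr : ∀ᵐ z : Fin (N + 1) → ℝ,
      Rg.indicator (fun z => ENNReal.ofReal (∏ v, f v (z v)))
        ((MeasurableEquiv.piCongrLeft (fun _ : V => ℝ) e) z) =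
      ser (fun _ => 1) (z 0) *
        ∏ n : Fin N, ker (o (e n.succ)) (d (e n.succ)) (z n.castSucc) (z n.succ) := by
    filter_upwards [hae] with z hz
    set y := (MeasurableEquiv.piCongrLeft (fun _ : V => ℝ) e) z with hy
    by_cases hmem : y ∈ Rg
    · rw [Set.indicator_of_mem hmem]
      rw [hRg] at hmem
      have hIoo : ∀ n, 0 < z n ∧ z n < 1 := by
        intro n
        have := hmem.1 (e n)
        rw [hy, hval] at this
        exact ⟨lt_of_le_of_ne this.1 (hz n).1.symm, lt_of_le_of_ne this.2 (hz n).2⟩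
      rw [ENNReal.ofReal_prod_of_nonneg (fun v _ => hf0 v _ (hmem.1 v).1 (hmem.1 v).2),
        ← e.prod_comp, Fin.prod_univ_succ]
      congr 1
      · rw [hy, hval, hf, h0, if_pos rfl, ser, if_pos (hIoo 0)]
        simp only [one_mul]
        rw [ENNReal.tsum_geometric, one_div,
          ENNReal.ofReal_inv_of_pos (by linarith [(hIoo 0).2]),
          ENNReal.ofReal_sub _ (hIoo 0).1.le, ENNReal.ofReal_one]
      · refine Finset.prod_congr rfl fun n _ => ?_
        have := hmem.2 n
        rw [hy, hval, hval] at this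
        rw [ker, if_pos ⟨(hIoo _).1, (hIoo _).2, this⟩, hy, hval, hf]
    · rw [Set.indicator_of_notMem hmem]
      symm
      by_contra hne
      apply hmem
      rw [hRg]
      have hne1 := left_ne_zero_of_mul hne
      have hne2 := Finset.prod_ne_zero_iff.1 (right_ne_zero_of_mul hne)
      have hk : ∀ n : Fin N, 0 < z n.succ ∧ z n.succ < 1 ∧
          relR (d (e n.succ)) (z n.castSucc) (z n.succ) := by
        intro n
        by_contra hcon
        exact hne2 n (Finset.mem_univ _) (by rw [ker, if_neg hcon])
      have hz0 : 0 < z 0 ∧ z 0 < 1 := by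
        by_contra hcon
        exact hne1 (by rw [ser, if_neg hcon])
      refine ⟨fun v => ?_, fun n => ?_⟩
      · obtain ⟨n, rfl⟩ := e.surjective v
        rw [hy, hval]
        induction n using Fin.cases with
        | zero => exact ⟨hz0.1.le, hz0.2.le⟩
        | succ n => exact ⟨(hk n).1.le, (hk n).2.1.le⟩
      · rw [hy, hval, hval]
        exact (hk n).2.2
  rw [lintegral_congr_ae hcongr,
    chain_integral N _ (fun n => o (e n.succ)) (fun n => d (e n.succ)) (fun n => hod _)]
  rw [← (e.arrowCongr (Equiv.refl ℕ)).symm.tsum_eq]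
  refine Eq.trans ?_ (tsum_subtype {M : V → ℕ | ∀ n : Fin N,
          relQ (o (e n.succ)) (d (e n.succ)) (M (e n.castSucc)) (M (e n.succ))}
        (fun M => ∏ v, ((M v : ENNReal) + 1)⁻¹)).symm
  refine tsum_congr fun M => ?_
  have hM : ∀ n, (e.arrowCongr (Equiv.refl ℕ)).symm M n = M (e n) := fun n => rfl
  simp only [hM, one_mul]
  by_cases hc : ∀ n : Fin N,
          relQ (o (e n.succ)) (d (e n.succ)) (M (e n.castSucc)) (M (e n.succ))
  · rw [Set.indicator_of_mem (by exact hc), ← e.prod_comp, Fin.prod_univ_succ]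
    congr 1
    refine Finset.prod_congr rfl fun n _ => ?_
    rw [disc, if_pos (hc n)]
  · rw [Set.indicator_of_notMem (by exact hc)]
    push Not at hc
    obtain ⟨n, hn⟩ := hc
    rw [Finset.prod_eq_zero (Finset.mem_univ n), mul_zero]
    rw [disc, if_neg hn]

/-! ### Linear order on the variables of a chain of blocks -/

/-- Index type of a chain of `r` blocks, block `i` having `a i` variables followed by `b i`
further ones. -/
abbrev Idx (r : ℕ) (a b : ℕ → ℕ) : Type := Σ i : Fin r, (Fin (a i) ⊕ Fin (b i))

/-- Position at which block `i` starts. -/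
def off (a b : ℕ → ℕ) (i : ℕ) : ℕ := ∑ k ∈ Finset.range i, (a k + b k)

/-- Position of an index in the chain. -/
def pos {r : ℕ} {a b : ℕ → ℕ} : Idx r a b → ℕ
  | ⟨i, Sum.inl u⟩ => off a b i + u
  | ⟨i, Sum.inr u⟩ => off a b i + (a i + u)

lemma exists_enum (r : ℕ) (a b : ℕ → ℕ) :
    ∃ (N : ℕ) (e : Fin N ≃ Idx r a b), ∀ v, (e.symm v : ℕ) = pos v := by
  refine ⟨∑ i : Fin r, (a i + b i),
    ((Equiv.sigmaCongrRight fun i : Fin r => finSumFinEquiv).trans finSigmaFinEquiv).symm, ?_⟩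
  have hoff : ∀ i : Fin r, ∑ k : Fin (i : ℕ), (a (Fin.castLE i.2.le k : Fin r) +
      b (Fin.castLE i.2.le k : Fin r)) = off a b i := by
    intro i
    rw [off, Finset.sum_range]
    rfl
  rintro ⟨i, u | u⟩
  · simp only [Equiv.symm_symm, Equiv.trans_apply, finSigmaFinEquiv_apply,
      Equiv.sigmaCongrRight_apply, pos, hoff]
    simp
  · simp only [Equiv.symm_symm, Equiv.trans_apply, finSigmaFinEquiv_apply,
      Equiv.sigmaCongrRight_apply, pos, hoff]
    simp

lemma off_succ (a b : ℕ → ℕ) (i : ℕ) : off a b (i + 1) = off a b i + (a i + b i) := by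
  simp [off, Finset.sum_range_succ]

lemma off_mono (a b : ℕ → ℕ) : Monotone (off a b) :=
  monotone_nat_of_le_succ fun i => by rw [off_succ]; omega

/-- `P` holds for all pairs of neighbours in the chain of blocks. -/
def Adj (r : ℕ) (a b : ℕ → ℕ) (P : Idx r a b → Idx r a b → Prop) : Prop :=
  (∀ (i : Fin r) (t : ℕ) (h : t + 1 < a i),
    P ⟨i, Sum.inl ⟨t, Nat.lt_of_succ_lt h⟩⟩ ⟨i, Sum.inl ⟨t + 1, h⟩⟩) ∧
  (∀ (i : Fin r) (t : ℕ) (h : t + 1 < b i),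
    P ⟨i, Sum.inr ⟨t, Nat.lt_of_succ_lt h⟩⟩ ⟨i, Sum.inr ⟨t + 1, h⟩⟩) ∧
  (∀ (i : Fin r) (hA : 0 < a i) (hB : 0 < b i),
    P ⟨i, Sum.inl ⟨a i - 1, Nat.sub_lt hA one_pos⟩⟩ ⟨i, Sum.inr ⟨0, hB⟩⟩) ∧
  (∀ (i : Fin r) (hi : (i : ℕ) + 1 < r), b i = 0 → ∀ (hA : 0 < a i) (hA' : 0 < a ((i : ℕ) + 1)),
    P ⟨i, Sum.inl ⟨a i - 1, Nat.sub_lt hA one_pos⟩⟩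
      ⟨⟨(i : ℕ) + 1, hi⟩, Sum.inl ⟨0, hA'⟩⟩) ∧
  (∀ (i : Fin r) (hi : (i : ℕ) + 1 < r) (hB : 0 < b i) (hA' : 0 < a ((i : ℕ) + 1)),
    P ⟨i, Sum.inr ⟨b i - 1, Nat.sub_lt hB one_pos⟩⟩
      ⟨⟨(i : ℕ) + 1, hi⟩, Sum.inl ⟨0, hA'⟩⟩)

/-- Consecutive positions are exactly the neighbours in the chain of blocks, because only the
first block may lack the leading variables. -/
lemma adj_iff {r : ℕ} {a b : ℕ → ℕ} (ha : ∀ i, 0 < i → i < r → 0 < a i)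
    (P : Idx r a b → Idx r a b → Prop) :
    Adj r a b P ↔ ∀ v w, pos w = pos v + 1 → P v w := by
  constructor
  · rintro ⟨h1, h2, h3, h4, h5⟩ v w hvw
    -- Comparison of the starting positions of two blocks.
    have far : ∀ i j : ℕ, i < j → off a b i + (a i + b i) ≤ off a b j := by
      intro i j hij
      rw [← off_succ]
      exact off_mono a b hij
    have near : ∀ i j : ℕ, i < j → j < r → off a b j ≤ off a b i + (a i + b i) → j = i + 1 := by
      intro i j hij hj hle
      by_contra hne
      have h := far (i + 1) j (by omega)
      have := ha (i + 1) (by omega) (by omega)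
      rw [off_succ] at h
      omega
    obtain ⟨i, u⟩ := v
    obtain ⟨j, w⟩ := w
    rcases lt_trichotomy (i : ℕ) (j : ℕ) with hij | hij | hij
    · have hfar := far i j hij
      have hw : w = Sum.inl ⟨0, ha j (lt_of_le_of_lt (Nat.zero_le _) hij) j.2⟩ ∧
          (j : ℕ) = i + 1 := by
        rcases u with ⟨u, hu⟩ | ⟨u, hu⟩ <;> rcases w with ⟨w, hw⟩ | ⟨w, hw⟩ <;>
          simp only [pos] at hvw
        · have := near i j hij j.2 (by omega)
          exact ⟨by congr; omega, this⟩
        · have := ha j (by omega) j.2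
          omega
        · have := near i j hij j.2 (by omega)
          exact ⟨by congr; omega, this⟩
        · have := ha j (by omega) j.2
          omega
      obtain ⟨hw, hj⟩ := hw
      obtain ⟨j, hjr⟩ := j
      simp only at hj
      subst hj
      subst hw
      rcases u with ⟨u, hu⟩ | ⟨u, hu⟩ <;> simp only [pos, off_succ] at hvw
      · have hb : b i = 0 := by omega
        have : u = a i - 1 := by omega
        subst this
        exact h4 i _ hb (by omega) _
      · have : u = b i - 1 := by omega
        subst this
        exact h5 i _ (by omega) _
    · have hij' : i = j := Fin.ext hij
      subst hij'
      rcases u with ⟨u, hu⟩ | ⟨u, hu⟩ <;> rcases w with ⟨w, hw⟩ | ⟨w, hw⟩ <;>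
          simp only [pos] at hvw
      · have : w = u + 1 := by omega
        subst this
        exact h1 i u hw
      · have h : w = 0 := by omega
        have h' : u = a i - 1 := by omega
        subst h h'
        exact h3 i (by omega) (by omega)
      · omega
      · have : w = u + 1 := by omega
        subst this
        exact h2 i u hw
    · have hfar := far j i hij
      rcases u with ⟨u, hu⟩ | ⟨u, hu⟩ <;> rcases w with ⟨w, hw⟩ | ⟨w, hw⟩ <;>
          simp only [pos] at hvw <;> omega
  · intro h
    refine ⟨fun i t ht => h _ _ ?_, fun i t ht => h _ _ ?_, fun i hA hB => h _ _ ?_,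
      fun i hi hb hA hA' => h _ _ ?_, fun i hi hB hA' => h _ _ ?_⟩
    all_goals simp only [pos, off_succ]
    all_goals omega

lemma adj_iff_enum {r : ℕ} {a b : ℕ → ℕ} (ha : ∀ i, 0 < i → i < r → 0 < a i)
    (P : Idx r a b → Idx r a b → Prop) {N : ℕ} (e : Fin (N + 1) ≃ Idx r a b)
    (he : ∀ v, (e.symm v : ℕ) = pos v) :
    Adj r a b P ↔ ∀ n : Fin N, P (e n.castSucc) (e n.succ) := by
  rw [adj_iff ha]
  constructor
  · intro h n
    apply h
    rw [← he, ← he]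
    simp
  · intro h v w hvw
    rw [← he, ← he] at hvw
    have hlt : (e.symm v : ℕ) < N := by have := (e.symm w).2; omega
    have := h ⟨e.symm v, hlt⟩
    convert this
    · rw [← Equiv.symm_apply_eq]; rfl
    · rw [← Equiv.symm_apply_eq]; exact Fin.ext hvw

end RibbonChain

namespace RibbonChain

/-! ### Grouping the variables of a block into boxes -/

/-- For a sequence `S` of partial sums with `S 0 = 0`, the index `k < n` with
`S k ≤ u < S (k + 1)`. -/
def idx (S : ℕ → ℕ) (n u : ℕ) : ℕ := Nat.findGreatest (fun k => S k ≤ u) (n - 1)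

section Groups

variable {S : ℕ → ℕ} {n : ℕ}

lemma partial_mono (hS : ∀ k < n, S k < S (k + 1)) {k l : ℕ} (hkl : k ≤ l) (hl : l ≤ n) :
    S k ≤ S l := by
  induction l, hkl using Nat.le_induction with
  | base => exact le_rfl
  | succ l hkl ih => exact (ih (by omega)).trans (hS l (by omega)).le

lemma idx_spec (h0 : S 0 = 0) {u : ℕ} (hu : u < S n) :
    idx S n u < n ∧ S (idx S n u) ≤ u ∧ u < S (idx S n u + 1) := by
  have hn : 0 < n := by
    rcases Nat.eq_zero_or_pos n with h | h
    · subst h; omega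
    · exact h
  have hle : idx S n u ≤ n - 1 := Nat.findGreatest_le _
  refine ⟨by omega, ?_, ?_⟩
  · exact Nat.findGreatest_spec (P := fun k => S k ≤ u) (Nat.zero_le (n - 1)) (by simp [h0])
  · by_cases hlt : idx S n u < n - 1
    · have := Nat.findGreatest_is_greatest (P := fun k => S k ≤ u) (n := n - 1)
        (k := idx S n u + 1) (Nat.lt_succ_self _) hlt
      exact not_le.1 this
    · have : idx S n u + 1 = n := by omega
      rwa [this]

lemma idx_eq (h0 : S 0 = 0) (hS : ∀ k < n, S k < S (k + 1)) {k u : ℕ} (hk : k < n)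
    (h1 : S k ≤ u) (h2 : u < S (k + 1)) : idx S n u = k := by
  have hu : u < S n := lt_of_lt_of_le h2 (partial_mono hS hk le_rfl)
  obtain ⟨g1, g2, g3⟩ := idx_spec h0 hu
  rcases lt_trichotomy (idx S n u) k with h | h | h
  · have := partial_mono hS (k := idx S n u + 1) (l := k) h hk.le
    omega
  · exact h
  · have := partial_mono hS (k := k + 1) (l := idx S n u) h g1.le
    omega

lemma idx_zero (h0 : S 0 = 0) (hS : ∀ k < n, S k < S (k + 1)) (hn : 0 < n) : idx S n 0 = 0 :=
  idx_eq h0 hS hn (by omega) (by have := hS 0 hn; omega)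

lemma idx_last (h0 : S 0 = 0) (hS : ∀ k < n, S k < S (k + 1)) (hn : 0 < n) :
    idx S n (S n - 1) = n - 1 := by
  have := hS (n - 1) (by omega)
  have e : n - 1 + 1 = n := by omega
  rw [e] at this
  exact idx_eq h0 hS (by omega) (by omega) (by rw [e]; omega)

lemma idx_succ_of_mem (h0 : S 0 = 0) (hS : ∀ k < n, S k < S (k + 1)) {t : ℕ} (ht : t + 1 < S n)
    (hm : t + 1 ∈ (Finset.range n).image S) : idx S n (t + 1) = idx S n t + 1 := by
  obtain ⟨g1, g2, g3⟩ := idx_spec (n := n) h0 (u := t) (by omega)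
  simp only [Finset.mem_image, Finset.mem_range] at hm
  obtain ⟨j, hj, hjt⟩ := hm
  have hkj : j = idx S n t + 1 := by
    rcases lt_trichotomy j (idx S n t + 1) with h | h | h
    · have := partial_mono hS (k := j) (l := idx S n t) (by omega) g1.le
      omega
    · exact h
    · have := partial_mono hS (k := idx S n t + 2) (l := j) h hj.le
      have := hS (idx S n t + 1) (by omega)
      rw [show idx S n t + 1 + 1 = idx S n t + 2 by omega] at this
      omega
  rw [← hkj]
  have := hS j hj
  exact idx_eq h0 hS hj (by omega) (by omega)

lemma idx_succ_of_notMem (h0 : S 0 = 0) (hS : ∀ k < n, S k < S (k + 1)) {t : ℕ}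
    (ht : t + 1 < S n) (hm : t + 1 ∉ (Finset.range n).image S) :
    idx S n (t + 1) = idx S n t := by
  obtain ⟨g1, g2, g3⟩ := idx_spec (n := n) h0 (u := t) (by omega)
  apply idx_eq h0 hS g1 (by omega)
  by_contra hcon
  have e : t + 1 = S (idx S n t + 1) := by omega
  apply hm
  simp only [Finset.mem_image, Finset.mem_range]
  refine ⟨idx S n t + 1, ?_, e.symm⟩
  by_contra h
  have : idx S n t + 1 = n := by omega
  rw [this] at e
  omega

/-- A relation between consecutive boxes is the same as that relation between consecutive
variables that start a new box, together with equality inside each box. -/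
lemma group_iff (h0 : S 0 = 0) (hS : ∀ k < n, S k < S (k + 1)) (F : ℕ → ℕ)
    (Rl : ℕ → ℕ → Prop) :
    (∀ k, k + 1 < n → Rl (F k) (F (k + 1))) ↔
      ∀ t, t + 1 < S n → if t + 1 ∈ (Finset.range n).image S
        then Rl (F (idx S n t)) (F (idx S n (t + 1)))
        else F (idx S n t) = F (idx S n (t + 1)) := by
  constructor
  · intro h t ht
    split_ifs with hm
    · rw [idx_succ_of_mem h0 hS ht hm]
      apply h
      rw [← idx_succ_of_mem h0 hS ht hm]
      exact (idx_spec h0 ht).1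
    · rw [idx_succ_of_notMem h0 hS ht hm]
  · intro h k hk
    have hk1 := hS k (by omega)
    have hk2 := hS (k + 1) hk
    have hkn := partial_mono hS (k := k + 2) (l := n) hk le_rfl
    have e : S (k + 1) - 1 + 1 = S (k + 1) := by omega
    have := h (S (k + 1) - 1) (by rw [e]; exact lt_of_lt_of_le hk2 hkn)
    rw [e, if_pos (Finset.mem_image_of_mem _ (Finset.mem_range.2 hk)),
      idx_eq h0 hS hk le_rfl hk2, idx_eq h0 hS (k := k) (by omega) (by omega) (by omega)] at this
    exact this

lemma const_on_group (h0 : S 0 = 0) (hS : ∀ k < n, S k < S (k + 1)) (W : ℕ → ℕ)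
    (hW : ∀ t, t + 1 < S n → t + 1 ∉ (Finset.range n).image S → W t = W (t + 1))
    {u v : ℕ} (hu : u < S n) (hv : v < S n) (h : idx S n u = idx S n v) : W u = W v := by
  have key : ∀ k < n, ∀ j, S k + j < S (k + 1) → W (S k + j) = W (S k) := by
    intro k hk j
    induction j with
    | zero => intro _; rfl
    | succ j ih =>
      intro hj
      rw [← ih (by omega)]
      symm
      have hlt : S k + j + 1 < S n :=
        lt_of_lt_of_le hj (partial_mono hS (k := k + 1) hk le_rfl)
      apply hW _ hlt
      intro hm
      have := idx_succ_of_mem h0 hS hlt hm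
      rw [idx_eq h0 hS hk (by omega) (by omega), idx_eq h0 hS hk (by omega) (by omega)] at this
      omega
  have key' : ∀ u, u < S n → W u = W (S (idx S n u)) := by
    intro u hu
    obtain ⟨g1, g2, g3⟩ := idx_spec h0 hu
    have := key _ g1 (u - S (idx S n u)) (by omega)
    rwa [show S (idx S n u) + (u - S (idx S n u)) = u by omega] at this
  rw [key' u hu, key' v hv, h]

lemma prod_group (f : ℕ → ℕ) (n : ℕ) (hf : ∀ k < n, 0 < f k) (G : ℕ → ℂ) :
    ∏ u ∈ Finset.range (∑ t ∈ Finset.range n, f t),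
        G (idx (fun k => ∑ t ∈ Finset.range k, f t) n u) =
      ∏ k ∈ Finset.range n, G k ^ f k := by
  set S : ℕ → ℕ := fun k => ∑ t ∈ Finset.range k, f t with hSdef
  have h0 : S 0 = 0 := by simp [hSdef]
  have hsucc : ∀ k, S (k + 1) = S k + f k := fun k => Finset.sum_range_succ _ _
  have hS : ∀ k < n, S k < S (k + 1) := fun k hk => by
    rw [hsucc]; have := hf k hk; omega
  have key : ∀ l ≤ n, ∏ u ∈ Finset.range (S l), G (idx S n u) =
      ∏ k ∈ Finset.range l, G k ^ f k := by
    intro l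
    induction l with
    | zero => intro _; simp [h0]
    | succ l ih =>
      intro hl
      rw [hsucc, Finset.prod_range_add, ih (by omega), Finset.prod_range_succ]
      congr 1
      rw [Finset.prod_congr rfl (g := fun _ => G l), Finset.prod_const, Finset.card_range]
      intro x hx
      have := Finset.mem_range.1 hx
      rw [idx_eq h0 hS (k := l) (by omega) (by omega) (by rw [hsucc]; omega)]
  exact key n le_rfl

end Groups

/-! ### Geometry of the ribbon -/

section Geometry

open SMZ

lemma ribRow_succ (q : ℕ → ℕ) (i : ℕ) : ribRow q (i + 1) = ribRow q i + 1 + q i := by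
  simp only [ribRow, Finset.sum_range_succ]; omega

lemma ribCol_eq {r : ℕ} (p : ℕ → ℕ) {i : ℕ} (hi : i + 1 < r) :
    ribCol r p i = ribCol r p (i + 1) + (p (i + 1) - 1) := by
  simp only [ribCol]
  rw [Finset.sum_eq_sum_Ico_succ_bot hi, add_comm]

lemma ribRow_inj {q : ℕ → ℕ} {i j e e' : ℕ} (he : e ≤ q i) (he' : e' ≤ q j)
    (h : ribRow q i + e = ribRow q j + e') : i = j ∧ e = e' := by
  have hm : Monotone (ribRow q) := monotone_nat_of_le_succ fun i => by rw [ribRow_succ]; omega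
  rcases lt_trichotomy i j with hij | hij | hij
  · have := hm (Nat.succ_le_of_lt hij)
    rw [Nat.succ_eq_add_one, ribRow_succ] at this
    omega
  · subst hij; exact ⟨rfl, by omega⟩
  · have := hm (Nat.succ_le_of_lt hij)
    rw [Nat.succ_eq_add_one, ribRow_succ] at this
    omega

lemma mem_ribbonDiag {r : ℕ} {p q : ℕ → ℕ} {b : ℕ × ℕ} :
    b ∈ ribbonDiag r p q ↔ ∃ i < r, (∃ c < p i, b = (ribRow q i, ribCol r p i + c)) ∨
      ∃ d < q i, b = (ribRow q i + 1 + d, ribCol r p i) := by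
  simp only [ribbonDiag, Finset.mem_biUnion, Finset.mem_range, Finset.mem_union,
    Finset.mem_image, eq_comm (b := b)]

/-- The order conditions of a semistandard tableau, read along the ribbon hook by hook. -/
def HookCond (r : ℕ) (p q : ℕ → ℕ) (m : ℕ × ℕ → ℕ) : Prop :=
  (∀ i < r, ∀ k, k + 1 < p i → m (ribRow q i, ribCol r p i + (p i - 1 - (k + 1))) ≤
    m (ribRow q i, ribCol r p i + (p i - 1 - k))) ∧
  (∀ i < r, ∀ l, l + 1 < q i → m (ribRow q i + 1 + l, ribCol r p i) <
    m (ribRow q i + 1 + (l + 1), ribCol r p i)) ∧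
  (∀ i < r, 0 < p i → 0 < q i → m (ribRow q i, ribCol r p i) <
    m (ribRow q i + 1, ribCol r p i)) ∧
  (∀ i, i + 1 < r → q i = 0 → 0 < p i → m (ribRow q i, ribCol r p i) <
    m (ribRow q (i + 1), ribCol r p (i + 1) + (p (i + 1) - 1))) ∧
  (∀ i, i + 1 < r → 0 < q i → m (ribRow q i + 1 + (q i - 1), ribCol r p i) <
    m (ribRow q (i + 1), ribCol r p (i + 1) + (p (i + 1) - 1)))

lemma isSSYTOn_iff {r : ℕ} {p q : ℕ → ℕ} (hp : ∀ i, 0 < i → i < r → 0 < p i)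
    (m : ℕ × ℕ → ℕ) :
    IsSSYTOn (ribbonDiag r p q) m ↔ (∀ b, b ∉ ribbonDiag r p q → m b = 0) ∧
      (∀ b ∈ ribbonDiag r p q, 0 < m b) ∧ HookCond r p q m := by
  have memR : ∀ i < r, ∀ c < p i, (ribRow q i, ribCol r p i + c) ∈ ribbonDiag r p q :=
    fun i hi c hc => mem_ribbonDiag.2 ⟨i, hi, Or.inl ⟨c, hc, rfl⟩⟩
  have memC : ∀ i < r, ∀ d < q i, (ribRow q i + 1 + d, ribCol r p i) ∈ ribbonDiag r p q :=
    fun i hi d hd => mem_ribbonDiag.2 ⟨i, hi, Or.inr ⟨d, hd, rfl⟩⟩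
  constructor
  · intro h
    refine ⟨h.zero_off, h.pos, ?_, ?_, ?_, ?_, ?_⟩
    · intro i hi k hk
      have e : ribCol r p i + (p i - 1 - k) = ribCol r p i + (p i - 1 - (k + 1)) + 1 := by omega
      have h2 := memR i hi (p i - 1 - k) (by omega)
      rw [e] at h2 ⊢
      exact h.row_le _ _ (memR i hi _ (by omega)) h2
    · intro i hi l hl
      exact h.col_lt _ _ (memC i hi l (by omega)) (memC i hi (l + 1) hl)
    · intro i hi hpi hqi
      exact h.col_lt _ _ (memR i hi 0 hpi) (memC i hi 0 hqi)
    · intro i hi hqi hpi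
      have h2 := memR (i + 1) hi (p (i + 1) - 1) (by have := hp (i + 1) (by omega) hi; omega)
      rw [← ribCol_eq p hi, ribRow_succ, hqi] at h2 ⊢
      exact h.col_lt _ _ (memR i (by omega) 0 hpi) h2
    · intro i hi hqi
      have h2 := memR (i + 1) hi (p (i + 1) - 1) (by have := hp (i + 1) (by omega) hi; omega)
      rw [← ribCol_eq p hi, ribRow_succ,
        show ribRow q i + 1 + q i = ribRow q i + 1 + (q i - 1) + 1 by omega] at h2 ⊢
      exact h.col_lt _ _ (memC i (by omega) (q i - 1) (by omega)) h2
  · rintro ⟨hz, hpos, h1, h2, h3, h4, h5⟩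
    refine ⟨hz, hpos, ?_, ?_⟩
    · intro x y hb hb'
      obtain ⟨i, hi, ⟨c, hc, e⟩ | ⟨d, hd, e⟩⟩ := mem_ribbonDiag.1 hb <;>
      obtain ⟨j, hj, ⟨c', hc', e'⟩ | ⟨d', hd', e'⟩⟩ := mem_ribbonDiag.1 hb' <;>
      simp only [Prod.mk.injEq] at e e' <;> obtain ⟨ex, ey⟩ := e <;> obtain ⟨ex', ey'⟩ := e'
      · obtain ⟨rfl, -⟩ := ribRow_inj (q := q) (i := i) (j := j) (e := 0) (e' := 0)
          (by omega) (by omega) (by omega)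
        have := h1 i hi (p i - 1 - c') (by omega)
        rw [show p i - 1 - (p i - 1 - c' + 1) = c by omega,
          show p i - 1 - (p i - 1 - c') = c' by omega] at this
        rw [ex, ey', ey]
        exact this
      · have := ribRow_inj (q := q) (i := i) (j := j) (e := 0) (e' := d' + 1)
          (by omega) (by omega) (by omega)
        omega
      · have := ribRow_inj (q := q) (i := i) (j := j) (e := d + 1) (e' := 0)
          (by omega) (by omega) (by omega)
        omega
      · obtain ⟨rfl, -⟩ := ribRow_inj (q := q) (i := i) (j := j) (e := d + 1) (e' := d' + 1)
          (by omega) (by omega) (by omega)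
        omega
    · intro x y hb hb'
      obtain ⟨i, hi, ⟨c, hc, e⟩ | ⟨d, hd, e⟩⟩ := mem_ribbonDiag.1 hb <;>
      obtain ⟨j, hj, ⟨c', hc', e'⟩ | ⟨d', hd', e'⟩⟩ := mem_ribbonDiag.1 hb' <;>
      simp only [Prod.mk.injEq] at e e' <;> obtain ⟨ex, ey⟩ := e <;> obtain ⟨ex', ey'⟩ := e'
      · by_cases hqi : q i = 0
        · have hs := ribRow_succ q i
          obtain ⟨rfl, -⟩ := ribRow_inj (q := q) (i := j) (j := i + 1) (e := 0) (e' := 0)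
            (by omega) (by omega) (by omega)
          have := h4 i hj hqi (by omega)
          have hC := ribCol_eq p hj
          rw [ex', ex]
          rw [show y = ribCol r p i by omega]
          rwa [← hC] at this
        · have := ribRow_inj (q := q) (i := i) (j := j) (e := 1) (e' := 0)
            (by omega) (by omega) (by omega)
          omega
      · obtain ⟨rfl, hd0⟩ := ribRow_inj (q := q) (i := i) (j := j) (e := 0) (e' := d')
          (by omega) (by omega) (by omega)
        rw [ex, ey']
        exact h3 i hi (by omega) (by omega)
      · by_cases hlt : d + 1 < q i
        · have := ribRow_inj (q := q) (i := i) (j := j) (e := d + 2) (e' := 0)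
            (by omega) (by omega) (by omega)
          omega
        · have hs := ribRow_succ q i
          obtain ⟨rfl, -⟩ := ribRow_inj (q := q) (i := j) (j := i + 1) (e := 0) (e' := 0)
            (by omega) (by omega) (by omega)
          have := h5 i hj (by omega)
          have hC := ribCol_eq p hj
          rw [ex', ex, ey]
          rwa [← hC, show q i - 1 = d by omega] at this
      · obtain ⟨rfl, hdd⟩ := ribRow_inj (q := q) (i := i) (j := j) (e := d + 1) (e' := d')
          (by omega) (by omega) (by omega)
        rw [ex, ey]
        exact h2 i hi d (by omega)

end Geometry

end RibbonChain

namespace RibbonChain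

/-! ### From chains of variables to tableaux -/

section Final

open SMZ

/-- The form attached to a variable is `dt/(1-t)`. -/
def isOne (r : ℕ) (p q : ℕ → ℕ) (α β : ℕ → ℕ → ℕ) : Idx r (aSize p α) (bSize q β) → Bool
  | ⟨i, Sum.inl u⟩ => decide ((u : ℕ) ∈ (Finset.range (p i)).image (aPartial p α i))
  | ⟨i, Sum.inr u⟩ => decide ((u : ℕ) ∈ (Finset.range (q i)).image (bPartial β i))

/-- A variable is smaller than its predecessor in the chain. -/
def isDesc (r : ℕ) (p q : ℕ → ℕ) (α β : ℕ → ℕ → ℕ) : Idx r (aSize p α) (bSize q β) → Bool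
  | ⟨i, Sum.inl u⟩ => decide ((u : ℕ) ∈ (Finset.Ico 1 (p i)).image (aPartial p α i))
  | ⟨_, Sum.inr _⟩ => false

/-- The box of the ribbon to which a variable belongs.  The rows of the hooks are traversed from
right to left. -/
def box (r : ℕ) (p q : ℕ → ℕ) (α β : ℕ → ℕ → ℕ) : Idx r (aSize p α) (bSize q β) → ℕ × ℕ
  | ⟨i, Sum.inl u⟩ => (ribRow q i, ribCol r p i + (p i - 1 - idx (aPartial p α i) (p i) u))
  | ⟨i, Sum.inr u⟩ => (ribRow q i + 1 + idx (bPartial β i) (q i) u, ribCol r p i)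

/-- The relation between the summation indices at two neighbouring variables. -/
def link (r : ℕ) (p q : ℕ → ℕ) (α β : ℕ → ℕ → ℕ) (M : Idx r (aSize p α) (bSize q β) → ℕ)
    (v w : Idx r (aSize p α) (bSize q β)) : Prop :=
  relQ (isOne r p q α β w) (isDesc r p q α β w) (M v) (M w)

variable {r : ℕ} {p q : ℕ → ℕ} {α β : ℕ → ℕ → ℕ}

lemma aSize_eq (p : ℕ → ℕ) (α : ℕ → ℕ → ℕ) (i : ℕ) : aSize p α i = aPartial p α i (p i) :=
  (Finset.sum_range_reflect (fun k => α i k) (p i)).symm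

lemma bSize_eq (q : ℕ → ℕ) (β : ℕ → ℕ → ℕ) (i : ℕ) : bSize q β i = bPartial β i (q i) := rfl

lemma aPartial_lt (hα : ∀ i < r, ∀ j < p i, 0 < α i j) {i : ℕ} (hi : i < r) :
    ∀ k < p i, aPartial p α i k < aPartial p α i (k + 1) := by
  intro k hk
  rw [aPartial, aPartial, Finset.sum_range_succ]
  have := hα i hi (p i - 1 - k) (by omega)
  omega

lemma bPartial_lt (hβ : ∀ i < r, ∀ j < q i, 0 < β i j) {i : ℕ} (hi : i < r) :
    ∀ k < q i, bPartial β i k < bPartial β i (k + 1) := by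
  intro k hk
  rw [bPartial, bPartial, Finset.sum_range_succ]
  have := hβ i hi k hk
  omega

lemma aPartial_zero (p : ℕ → ℕ) (α : ℕ → ℕ → ℕ) (i : ℕ) : aPartial p α i 0 = 0 := by
  simp [aPartial]

lemma bPartial_zero (β : ℕ → ℕ → ℕ) (i : ℕ) : bPartial β i 0 = 0 := by simp [bPartial]

lemma aSize_pos (hα : ∀ i < r, ∀ j < p i, 0 < α i j) {i : ℕ} (hi : i < r) :
    0 < aSize p α i ↔ 0 < p i := by
  constructor
  · intro h
    by_contra hc
    have : p i = 0 := by omega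
    simp [aSize, this] at h
  · intro h
    rw [aSize_eq]
    have h1 : aPartial p α i 0 < aPartial p α i 1 := aPartial_lt hα hi 0 h
    have h2 := partial_mono (aPartial_lt hα hi) (k := 1) (l := p i) h le_rfl
    omega

lemma bSize_pos (hβ : ∀ i < r, ∀ j < q i, 0 < β i j) {i : ℕ} (hi : i < r) :
    0 < bSize q β i ↔ 0 < q i := by
  constructor
  · intro h
    by_contra hc
    have : q i = 0 := by omega
    simp [bSize, this] at h
  · intro h
    rw [bSize_eq]
    have h1 : bPartial β i 0 < bPartial β i 1 := bPartial_lt hβ hi 0 h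
    have h2 := partial_mono (bPartial_lt hβ hi) (k := 1) (l := q i) h le_rfl
    omega

lemma mem_image_Ico_iff (p : ℕ → ℕ) (α : ℕ → ℕ → ℕ) (i t : ℕ) :
    t + 1 ∈ (Finset.Ico 1 (p i)).image (aPartial p α i) ↔
      t + 1 ∈ (Finset.range (p i)).image (aPartial p α i) := by
  simp only [Finset.mem_image, Finset.mem_Ico, Finset.mem_range]
  constructor
  · rintro ⟨k, ⟨_, hk⟩, h⟩; exact ⟨k, hk, h⟩
  · rintro ⟨k, hk, h⟩
    refine ⟨k, ⟨?_, hk⟩, h⟩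
    rcases Nat.eq_zero_or_pos k with h' | h'
    · subst h'; rw [aPartial_zero] at h; omega
    · exact h'

lemma isOne_inl_zero {i : Fin r} (h : 0 < p i) (hA : 0 < aSize p α i) :
    isOne r p q α β ⟨i, Sum.inl ⟨0, hA⟩⟩ = true := by
  simp only [isOne, decide_eq_true_eq, Finset.mem_image, Finset.mem_range]
  exact ⟨0, h, aPartial_zero _ _ _⟩

lemma isOne_inr_zero {i : Fin r} (h : 0 < q i) (hB : 0 < bSize q β i) :
    isOne r p q α β ⟨i, Sum.inr ⟨0, hB⟩⟩ = true := by
  simp only [isOne, decide_eq_true_eq, Finset.mem_image, Finset.mem_range]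
  exact ⟨0, h, bPartial_zero _ _⟩

lemma isDesc_inl_zero (hα : ∀ i < r, ∀ j < p i, 0 < α i j) {i : Fin r}
    (hA : 0 < aSize p α i) : isDesc r p q α β ⟨i, Sum.inl ⟨0, hA⟩⟩ = false := by
  simp only [isDesc, decide_eq_false_iff_not, Finset.mem_image, Finset.mem_Ico, not_exists, not_and]
  rintro k ⟨hk1, hk2⟩ h
  have h1 : aPartial p α i 0 < aPartial p α i 1 := aPartial_lt hα i.2 0 (by omega)
  have h2 := partial_mono (aPartial_lt hα i.2) (k := 1) (l := k) hk1 hk2.le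
  omega

lemma isOne_of_isDesc (v : Idx r (aSize p α) (bSize q β)) (h : isDesc r p q α β v = true) :
    isOne r p q α β v = true := by
  obtain ⟨i, u | u⟩ := v
  · simp only [isDesc, isOne, decide_eq_true_eq, Finset.mem_image, Finset.mem_Ico,
      Finset.mem_range] at h ⊢
    obtain ⟨k, hk, e⟩ := h
    exact ⟨k, hk.2, e⟩
  · simp [isDesc] at h

/-- The links of a chain of indices, written out for each kind of neighbours. -/
lemma adj_link_iff (hα : ∀ i < r, ∀ j < p i, 0 < α i j) (hβ : ∀ i < r, ∀ j < q i, 0 < β i j)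
    (M : Idx r (aSize p α) (bSize q β) → ℕ) :
    Adj r (aSize p α) (bSize q β) (link r p q α β M) ↔
      (∀ (i : Fin r) (t : ℕ) (h : t + 1 < aSize p α i),
        if t + 1 ∈ (Finset.range (p i)).image (aPartial p α i) then
          M ⟨i, Sum.inl ⟨t + 1, h⟩⟩ ≤ M ⟨i, Sum.inl ⟨t, Nat.lt_of_succ_lt h⟩⟩
        else M ⟨i, Sum.inl ⟨t, Nat.lt_of_succ_lt h⟩⟩ = M ⟨i, Sum.inl ⟨t + 1, h⟩⟩) ∧
      (∀ (i : Fin r) (t : ℕ) (h : t + 1 < bSize q β i),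
        if t + 1 ∈ (Finset.range (q i)).image (bPartial β i) then
          M ⟨i, Sum.inr ⟨t, Nat.lt_of_succ_lt h⟩⟩ < M ⟨i, Sum.inr ⟨t + 1, h⟩⟩
        else M ⟨i, Sum.inr ⟨t, Nat.lt_of_succ_lt h⟩⟩ = M ⟨i, Sum.inr ⟨t + 1, h⟩⟩) ∧
      (∀ (i : Fin r) (hA : 0 < aSize p α i) (hB : 0 < bSize q β i),
        M ⟨i, Sum.inl ⟨aSize p α i - 1, Nat.sub_lt hA one_pos⟩⟩ < M ⟨i, Sum.inr ⟨0, hB⟩⟩) ∧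
      (∀ (i : Fin r) (hi : (i : ℕ) + 1 < r), bSize q β i = 0 →
        ∀ (hA : 0 < aSize p α i) (hA' : 0 < aSize p α ((i : ℕ) + 1)),
        M ⟨i, Sum.inl ⟨aSize p α i - 1, Nat.sub_lt hA one_pos⟩⟩ <
          M ⟨⟨(i : ℕ) + 1, hi⟩, Sum.inl ⟨0, hA'⟩⟩) ∧
      (∀ (i : Fin r) (hi : (i : ℕ) + 1 < r) (hB : 0 < bSize q β i)
        (hA' : 0 < aSize p α ((i : ℕ) + 1)),
        M ⟨i, Sum.inr ⟨bSize q β i - 1, Nat.sub_lt hB one_pos⟩⟩ <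
          M ⟨⟨(i : ℕ) + 1, hi⟩, Sum.inl ⟨0, hA'⟩⟩) := by
  unfold Adj link
  refine and_congr ?_ (and_congr ?_ (and_congr ?_ (and_congr ?_ ?_)))
  · refine forall_congr' fun i => forall_congr' fun t => forall_congr' fun h => ?_
    simp only [relQ, isOne, isDesc, decide_eq_true_eq, mem_image_Ico_iff]
    split_ifs <;> rfl
  · refine forall_congr' fun i => forall_congr' fun t => forall_congr' fun h => ?_
    simp [relQ, isOne, isDesc]
  · refine forall_congr' fun i => forall_congr' fun hA => forall_congr' fun hB => ?_
    rw [isOne_inr_zero ((bSize_pos hβ i.2).1 hB)]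
    simp [relQ, isDesc]
  · refine forall_congr' fun i => forall_congr' fun hi => forall_congr' fun hb =>
      forall_congr' fun hA => forall_congr' fun hA' => ?_
    rw [isOne_inl_zero ((aSize_pos hα hi).1 hA'), isDesc_inl_zero hα]
    simp [relQ]
  · refine forall_congr' fun i => forall_congr' fun hi => forall_congr' fun hb =>
      forall_congr' fun hA' => ?_
    rw [isOne_inl_zero ((aSize_pos hα hi).1 hA'), isDesc_inl_zero hα]
    simp [relQ]

/-- The tableau conditions on `m` translate into the links between variables when every variable
carries the entry of its box. -/
lemma hookCond_iff (hp : ∀ i, 0 < i → i < r → 0 < p i)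
    (hα : ∀ i < r, ∀ j < p i, 0 < α i j) (hβ : ∀ i < r, ∀ j < q i, 0 < β i j)
    (m : ℕ × ℕ → ℕ) :
    HookCond r p q m ↔
      Adj r (aSize p α) (bSize q β) (link r p q α β fun v => m (box r p q α β v)) := by
  rw [adj_link_iff hα hβ, HookCond]
  have ia0 : ∀ i < r, 0 < p i → idx (aPartial p α i) (p i) 0 = 0 := fun i hi h =>
    idx_zero (aPartial_zero p α i) (aPartial_lt hα hi) h
  have ib0 : ∀ i < r, 0 < q i → idx (bPartial β i) (q i) 0 = 0 := fun i hi h =>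
    idx_zero (bPartial_zero β i) (bPartial_lt hβ hi) h
  have ial : ∀ i < r, 0 < p i → idx (aPartial p α i) (p i) (aSize p α i - 1) = p i - 1 :=
    fun i hi h => by rw [aSize_eq]; exact idx_last (aPartial_zero p α i) (aPartial_lt hα hi) h
  have ibl : ∀ i < r, 0 < q i → idx (bPartial β i) (q i) (bSize q β i - 1) = q i - 1 :=
    fun i hi h => by rw [bSize_eq]; exact idx_last (bPartial_zero β i) (bPartial_lt hβ hi) h
  refine and_congr ?_ (and_congr ?_ (and_congr ?_ (and_congr ?_ ?_)))
  · rw [Fin.forall_iff]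
    refine forall_congr' fun i => forall_congr' fun hi => ?_
    simp only [box]
    have := group_iff (aPartial_zero p α i) (aPartial_lt hα hi)
      (fun k => m (ribRow q i, ribCol r p i + (p i - 1 - k))) (fun x y => y ≤ x)
    rw [← aSize_eq] at this
    exact this
  · rw [Fin.forall_iff]
    refine forall_congr' fun i => forall_congr' fun hi => ?_
    simp only [box]
    exact group_iff (bPartial_zero β i) (bPartial_lt hβ hi)
      (fun k => m (ribRow q i + 1 + k, ribCol r p i)) (fun x y => x < y)
  · rw [Fin.forall_iff]
    refine forall_congr' fun i => forall_congr' fun hi => ?_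
    simp only [box]
    rw [aSize_pos hα hi, bSize_pos hβ hi]
    refine forall_congr' fun h1 => forall_congr' fun h2 => ?_
    rw [ial i hi h1, ib0 i hi h2]
    simp
  · rw [Fin.forall_iff]
    refine forall_congr' fun i => ?_
    constructor
    · intro h hi hi' hb hA hA'
      have h1 := (aSize_pos hα hi).1 hA
      have h2 := (aSize_pos hα hi').1 hA'
      have hq : q i = 0 := by
        by_contra hc
        have := (bSize_pos hβ hi).2 (Nat.pos_of_ne_zero hc)
        simp only at hb
        omega
      have := h hi' hq h1
      simp only [box]
      rw [ial i hi h1, ia0 (i + 1) hi' h2]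
      simpa using this
    · intro h hi' hq h1
      have hi : i < r := by omega
      have h2 := hp (i + 1) (by omega) hi'
      have := h hi hi' (by simp [bSize, hq]) ((aSize_pos hα hi).2 h1) ((aSize_pos hα hi').2 h2)
      simp only [box] at this
      rw [ial i hi h1, ia0 (i + 1) hi' h2] at this
      simpa using this
  · rw [Fin.forall_iff]
    refine forall_congr' fun i => ?_
    constructor
    · intro h hi hi' hB hA'
      have h1 := (bSize_pos hβ hi).1 hB
      have h2 := (aSize_pos hα hi').1 hA'
      have := h hi' h1
      simp only [box]
      rw [ibl i hi h1, ia0 (i + 1) hi' h2]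
      simpa using this
    · intro h hi' h1
      have hi : i < r := by omega
      have h2 := hp (i + 1) (by omega) hi'
      have := h hi hi' ((bSize_pos hβ hi).2 h1) ((aSize_pos hα hi').2 h2)
      simp only [box] at this
      rw [ibl i hi h1, ia0 (i + 1) hi' h2] at this
      simpa using this

lemma mem_ribbonDiag_iff_box (hα : ∀ i < r, ∀ j < p i, 0 < α i j)
    (hβ : ∀ i < r, ∀ j < q i, 0 < β i j) (b : ℕ × ℕ) :
    b ∈ ribbonDiag r p q ↔ ∃ v, box r p q α β v = b := by
  rw [mem_ribbonDiag]
  constructor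
  · rintro ⟨i, hi, ⟨c, hc, rfl⟩ | ⟨d, hd, rfl⟩⟩
    · have hlt := aPartial_lt hα hi (p i - 1 - c) (by omega)
      have hle := partial_mono (aPartial_lt hα hi) (k := p i - 1 - c + 1) (l := p i)
        (by omega) le_rfl
      refine ⟨⟨⟨i, hi⟩, Sum.inl ⟨aPartial p α i (p i - 1 - c), by simp only [aSize_eq]; omega⟩⟩, ?_⟩
      simp only [box]
      rw [idx_eq (aPartial_zero p α i) (aPartial_lt hα hi) (k := p i - 1 - c) (by omega) le_rfl hlt,
        show p i - 1 - (p i - 1 - c) = c by omega]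
    · have hlt := bPartial_lt hβ hi d hd
      have hle := partial_mono (bPartial_lt hβ hi) (k := d + 1) (l := q i) hd le_rfl
      refine ⟨⟨⟨i, hi⟩, Sum.inr ⟨bPartial β i d, by simp only [bSize_eq]; omega⟩⟩, ?_⟩
      simp only [box]
      rw [idx_eq (bPartial_zero β i) (bPartial_lt hβ hi) hd le_rfl hlt]
  · rintro ⟨⟨i, ⟨u, hu⟩ | ⟨u, hu⟩⟩, rfl⟩
    · rw [aSize_eq] at hu
      have := (idx_spec (aPartial_zero p α i) hu).1
      exact ⟨i, i.2, Or.inl ⟨_, by omega, rfl⟩⟩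
    · rw [bSize_eq] at hu
      have := (idx_spec (bPartial_zero β i) hu).1
      exact ⟨i, i.2, Or.inr ⟨_, this, rfl⟩⟩

/-- In a linked chain, all variables of one box carry the same index. -/
lemma eq_of_box_eq (hα : ∀ i < r, ∀ j < p i, 0 < α i j) (hβ : ∀ i < r, ∀ j < q i, 0 < β i j)
    (M : Idx r (aSize p α) (bSize q β) → ℕ)
    (hM : Adj r (aSize p α) (bSize q β) (link r p q α β M))
    (v w : Idx r (aSize p α) (bSize q β)) (h : box r p q α β v = box r p q α β w) :
    M v = M w := by
  rw [adj_link_iff hα hβ] at hM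
  obtain ⟨h1, h2, -⟩ := hM
  obtain ⟨i, ⟨u, hu⟩ | ⟨u, hu⟩⟩ := v <;> obtain ⟨j, ⟨w, hw⟩ | ⟨w, hw⟩⟩ := w <;>
    simp only [box, Prod.mk.injEq] at h
  · obtain ⟨hij, -⟩ := ribRow_inj (q := q) (i := i) (j := j) (e := 0) (e' := 0)
      (by omega) (by omega) (by omega)
    obtain rfl := Fin.ext hij
    have hu' : u < aPartial p α i (p i) := by rwa [← aSize_eq]
    have hw' : w < aPartial p α i (p i) := by rwa [← aSize_eq]
    have su := (idx_spec (aPartial_zero p α i) hu').1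
    have sw := (idx_spec (aPartial_zero p α i) hw').1
    have := const_on_group (aPartial_zero p α i) (aPartial_lt hα i.2)
      (fun u => if h : u < aSize p α i then M ⟨i, Sum.inl ⟨u, h⟩⟩ else 0) ?_ hu' hw' (by omega)
    · simpa only [dif_pos hu, dif_pos hw] using this
    · intro t ht hn
      rw [← aSize_eq] at ht
      simp only [dif_pos ht, dif_pos (Nat.lt_of_succ_lt ht)]
      have := h1 i t ht
      rwa [if_neg hn] at this
  · have := (idx_spec (bPartial_zero β j) (by rwa [← bSize_eq])).1
    have := ribRow_inj (q := q) (i := i) (j := j) (e := 0)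
      (e' := idx (bPartial β j) (q j) w + 1) (by omega) (by omega) (by omega)
    omega
  · have := (idx_spec (bPartial_zero β i) (by rwa [← bSize_eq])).1
    have := ribRow_inj (q := q) (i := i) (j := j) (e := idx (bPartial β i) (q i) u + 1)
      (e' := 0) (by omega) (by omega) (by omega)
    omega
  · have su := (idx_spec (bPartial_zero β i) (by rwa [← bSize_eq])).1
    have sw := (idx_spec (bPartial_zero β j) (by rwa [← bSize_eq])).1
    obtain ⟨hij, -⟩ := ribRow_inj (q := q) (i := i) (j := j)
      (e := idx (bPartial β i) (q i) u + 1) (e' := idx (bPartial β j) (q j) w + 1)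
      (by omega) (by omega) (by omega)
    obtain rfl := Fin.ext hij
    have := const_on_group (bPartial_zero β i) (bPartial_lt hβ i.2)
      (fun u => if h : u < bSize q β i then M ⟨i, Sum.inr ⟨u, h⟩⟩ else 0) ?_ hu hw (by omega)
    · simpa only [dif_pos hu, dif_pos hw] using this
    · intro t ht hn
      rw [← bSize_eq] at ht
      simp only [dif_pos ht, dif_pos (Nat.lt_of_succ_lt ht)]
      have := h2 i t ht
      rwa [if_neg hn] at this

lemma link_shift (M : Idx r (aSize p α) (bSize q β) → ℕ) :
    link r p q α β (fun v => M v + 1) = link r p q α β M := by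
  funext v w
  simp [link, relQ]

/-- Semistandard tableaux on the ribbon correspond to linked chains of indices, by giving each
variable the entry of its box minus one. -/
lemma tableaux_bijective (hp : ∀ i, 0 < i → i < r → 0 < p i)
    (hα : ∀ i < r, ∀ j < p i, 0 < α i j) (hβ : ∀ i < r, ∀ j < q i, 0 < β i j) :
    ∃ E : {m : ℕ × ℕ → ℕ // IsSSYTOn (ribbonDiag r p q) m} ≃
        {M : Idx r (aSize p α) (bSize q β) → ℕ //
          Adj r (aSize p α) (bSize q β) (link r p q α β M)},
      ∀ m v, m.1 (box r p q α β v) = (E m).1 v + 1 := by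
  have hmem : ∀ v, box r p q α β v ∈ ribbonDiag r p q := fun v =>
    (mem_ribbonDiag_iff_box hα hβ _).2 ⟨v, rfl⟩
  have hsub : ∀ m : {m : ℕ × ℕ → ℕ // IsSSYTOn (ribbonDiag r p q) m}, ∀ v,
      m.1 (box r p q α β v) = (m.1 (box r p q α β v) - 1) + 1 := by
    intro m v
    have := m.2.pos _ (hmem v)
    omega
  let F : {m : ℕ × ℕ → ℕ // IsSSYTOn (ribbonDiag r p q) m} →
      {M : Idx r (aSize p α) (bSize q β) → ℕ //
          Adj r (aSize p α) (bSize q β) (link r p q α β M)} := fun m =>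
    ⟨fun v => m.1 (box r p q α β v) - 1, by
      have := (hookCond_iff hp hα hβ m.1).1 ((isSSYTOn_iff hp m.1).1 m.2).2.2
      rw [← link_shift]
      simpa only [← hsub m] using this⟩
  have hF : Function.Bijective F := by
    constructor
    · intro m m' h
      apply Subtype.ext
      funext b
      by_cases hb : b ∈ ribbonDiag r p q
      · obtain ⟨v, rfl⟩ := (mem_ribbonDiag_iff_box hα hβ b).1 hb
        rw [hsub m, hsub m']
        have := congrFun (congrArg Subtype.val h) v
        simp only [F] at this
        rw [this]
      · rw [m.2.zero_off b hb, m'.2.zero_off b hb]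
    · intro M
      classical
      let m : ℕ × ℕ → ℕ := fun b =>
        if h : ∃ v, box r p q α β v = b then M.1 h.choose + 1 else 0
      have hm : ∀ v, m (box r p q α β v) = M.1 v + 1 := by
        intro v
        have h : ∃ w, box r p q α β w = box r p q α β v := ⟨v, rfl⟩
        simp only [m, dif_pos h]
        rw [eq_of_box_eq hα hβ M.1 M.2 _ _ h.choose_spec]
      refine ⟨⟨m, (isSSYTOn_iff hp m).2 ⟨?_, ?_, ?_⟩⟩, ?_⟩
      · intro b hb
        rw [mem_ribbonDiag_iff_box hα hβ] at hb
        simp only [m, dif_neg hb]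
      · intro b hb
        obtain ⟨v, rfl⟩ := (mem_ribbonDiag_iff_box hα hβ b).1 hb
        rw [hm]; omega
      · rw [hookCond_iff hp hα hβ]
        simp only [hm]
        rw [link_shift]
        exact M.2
      · apply Subtype.ext
        funext v
        simp [F, hm]
  exact ⟨Equiv.ofBijective F hF, fun m v => hsub m v⟩

/-- The summand of the Schur multiple zeta series as a product over all variables. -/
lemma prod_box (hα : ∀ i < r, ∀ j < p i, 0 < α i j) (hβ : ∀ i < r, ∀ j < q i, 0 < β i j)
    (g : ℕ × ℕ → ℂ)
    (hg_row : ∀ i < r, ∀ c < p i, g (ribRow q i, ribCol r p i + c) = ((α i c : ℕ) : ℂ))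
    (hg_col : ∀ i < r, ∀ d < q i, g (ribRow q i + 1 + d, ribCol r p i) = ((β i d : ℕ) : ℂ))
    (m : ℕ × ℕ → ℕ) :
    ∏ b ∈ ribbonDiag r p q, (m b : ℂ) ^ (-(g b)) =
      ∏ v, ((m (box r p q α β v) : ℂ))⁻¹ := by
  rw [ribbonDiag, Finset.prod_biUnion]
  swap
  · intro i hi j hj hij
    rw [Function.onFun, Finset.disjoint_left]
    intro b hb hb'
    apply hij
    simp only [Finset.mem_union, Finset.mem_image, Finset.mem_range] at hb hb'
    rcases hb with ⟨c, hc, rfl⟩ | ⟨d, hd, rfl⟩ <;> rcases hb' with ⟨c', hc', e⟩ | ⟨d', hd', e⟩ <;>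
      simp only [Prod.mk.injEq] at e
    · exact (ribRow_inj (q := q) (e := 0) (e' := 0) (by omega) (by omega) (by omega)).1
    · exact (ribRow_inj (q := q) (e := 0) (e' := d' + 1) (by omega) (by omega) (by omega)).1
    · exact (ribRow_inj (q := q) (e := d + 1) (e' := 0) (by omega) (by omega) (by omega)).1
    · exact (ribRow_inj (q := q) (e := d + 1) (e' := d' + 1) (by omega) (by omega) (by omega)).1
  rw [Fintype.prod_sigma, Finset.prod_range]
  refine Finset.prod_congr rfl fun i _ => ?_
  rw [Fintype.prod_sum_type, Finset.prod_union]
  swap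
  · rw [Finset.disjoint_left]
    intro b hb hb'
    simp only [Finset.mem_image, Finset.mem_range] at hb hb'
    obtain ⟨c, hc, rfl⟩ := hb
    obtain ⟨d, hd, e⟩ := hb'
    simp only [Prod.mk.injEq] at e
    omega
  congr 1
  · rw [Finset.prod_image (by intro c _ c' _ e; simpa using e)]
    simp only [box]
    have key := prod_group (fun t => α i (p i - 1 - t)) (p i)
      (fun k hk => hα i i.2 _ (by omega))
      (fun k => ((m (ribRow q i, ribCol r p i + (p i - 1 - k)) : ℂ))⁻¹)
    have e : ∑ t ∈ Finset.range (p i), α i (p i - 1 - t) = aSize p α i :=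
      Finset.sum_range_reflect (fun k => α i k) (p i)
    rw [e, Finset.prod_range] at key
    refine Eq.trans ?_ key.symm
    rw [Finset.prod_range_reflect
      (fun c => ((m (ribRow q i, ribCol r p i + c) : ℂ))⁻¹ ^ α i c) (p i)]
    refine Finset.prod_congr rfl fun c hc => ?_
    rw [hg_row i i.2 c (Finset.mem_range.1 hc), Complex.cpow_neg, Complex.cpow_natCast, inv_pow]
  · rw [Finset.prod_image (by intro c _ c' _ e; simpa using e)]
    simp only [box]
    have key := prod_group (fun t => β i t) (q i) (fun k hk => hβ i i.2 _ hk)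
      (fun k => ((m (ribRow q i + 1 + k, ribCol r p i) : ℂ))⁻¹)
    rw [Finset.prod_range] at key
    refine Eq.trans ?_ key.symm
    refine Finset.prod_congr rfl fun c hc => ?_
    rw [hg_col i i.2 c (Finset.mem_range.1 hc), Complex.cpow_neg, Complex.cpow_natCast, inv_pow]

lemma mem_ribRegion_iff (hα : ∀ i < r, ∀ j < p i, 0 < α i j)
    (hβ : ∀ i < r, ∀ j < q i, 0 < β i j) (z : Idx r (aSize p α) (bSize q β) → ℝ) :
    z ∈ ribRegion r p q α β ↔ (∀ v, 0 ≤ z v ∧ z v ≤ 1) ∧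
      Adj r (aSize p α) (bSize q β) (fun v w => relR (isDesc r p q α β w) (z v) (z w)) := by
  unfold ribRegion Adj
  rw [Set.mem_ofPred_eq]
  refine and_congr Iff.rfl (and_congr ?_ (and_congr ?_ (and_congr ?_ (and_congr ?_ ?_))))
  · refine forall_congr' fun i => forall_congr' fun t => forall_congr' fun h => ?_
    simp only [relR, isDesc, decide_eq_true_eq]
  · refine forall_congr' fun i => forall_congr' fun t => forall_congr' fun h => ?_
    simp [relR, isDesc]
  · refine forall_congr' fun i => ?_
    constructor
    · intro h hA hB
      simpa [relR, isDesc] using h ((bSize_pos hβ i.2).1 hB) hA hB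
    · intro h _ hA hB
      simpa [relR, isDesc] using h hA hB
  · refine forall_congr' fun i => forall_congr' fun hi => ?_
    have hq : q i = 0 ↔ bSize q β i = 0 := by
      have := bSize_pos hβ i.2
      omega
    rw [hq]
    refine forall_congr' fun hb => forall_congr' fun hA => forall_congr' fun hA' => ?_
    beta_reduce
    rw [isDesc_inl_zero hα]
    simp [relR]
  · refine forall_congr' fun i => forall_congr' fun hi => forall_congr' fun hb =>
      forall_congr' fun hA' => ?_
    beta_reduce
    rw [isDesc_inl_zero hα]
    simp [relR]

/-- The integral over `Δ(γ)` as a sum over linked chains of indices. -/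
lemma integral_ribRegion (hp : ∀ i, 0 < i → i < r → 0 < p i)
    (hα : ∀ i < r, ∀ j < p i, 0 < α i j) (hβ : ∀ i < r, ∀ j < q i, 0 < β i j) :
    ∫ z in ribRegion r p q α β, ∏ v, ribFactor r p q α β v (z v) =
      (∑' M : {M : Idx r (aSize p α) (bSize q β) → ℕ //
          Adj r (aSize p α) (bSize q β) (link r p q α β M)},
        ∏ v, ((M.1 v : ENNReal) + 1)⁻¹).toReal := by
  have ha : ∀ i, 0 < i → i < r → 0 < aSize p α i := fun i h0 hi =>
    (aSize_pos hα hi).2 (hp i h0 hi)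
  obtain ⟨N, e, he⟩ := exists_enum r (aSize p α) (bSize q β)
  rcases N with _ | N
  · -- There are no variables: both sides are the value of an empty product.
    have hV : IsEmpty (Idx r (aSize p α) (bSize q β)) := e.symm.isEmpty
    have hR : ribRegion r p q α β = Set.univ := by
      ext z
      rw [mem_ribRegion_iff hα hβ, adj_iff ha]
      simp only [Set.mem_univ, iff_true]
      exact ⟨fun v => hV.elim v, fun v => hV.elim v⟩
    have hA : ∀ M, Adj r (aSize p α) (bSize q β) (link r p q α β M) := by
      intro M
      rw [adj_iff ha]
      exact fun v => hV.elim v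
    have : Unique {M : Idx r (aSize p α) (bSize q β) → ℕ //
        Adj r (aSize p α) (bSize q β) (link r p q α β M)} :=
      { default := ⟨fun v => hV.elim v, hA _⟩
        uniq := fun M => Subtype.ext (funext fun v => hV.elim v) }
    rw [hR, tsum_fintype]
    simp [Measure.real, volume_pi]
  · have h0 : isOne r p q α β (e 0) = true := by
      have hpos := he (e 0)
      rw [Equiv.symm_apply_apply] at hpos
      generalize e 0 = v at hpos
      obtain ⟨i, ⟨u, hu⟩ | ⟨u, hu⟩⟩ := v <;> simp only [pos, Fin.val_zero] at hpos
      · have : u = 0 := by omega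
        subst this
        exact isOne_inl_zero ((aSize_pos hα i.2).1 hu) hu
      · have : u = 0 := by omega
        subst this
        exact isOne_inr_zero ((bSize_pos hβ i.2).1 hu) hu
    have main := chain_integral_enum e (isOne r p q α β) (isDesc r p q α β) isOne_of_isDesc h0
      (ribRegion r p q α β)
      (fun z => by rw [mem_ribRegion_iff hα hβ, adj_iff_enum ha _ e he])
      (ribFactor r p q α β)
      (by rintro ⟨i, u | u⟩ t <;> simp [ribFactor, isOne])
    rw [main]
    congr 1
    have hiff : ∀ M : Idx r (aSize p α) (bSize q β) → ℕ,
        (∀ n : Fin N, relQ (isOne r p q α β (e n.succ)) (isDesc r p q α β (e n.succ))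
          (M (e n.castSucc)) (M (e n.succ))) ↔
        Adj r (aSize p α) (bSize q β) (link r p q α β M) := by
      intro M
      rw [adj_iff_enum ha _ e he]
      rfl
    exact (Equiv.subtypeEquivRight hiff).tsum_eq (fun M => ∏ v, ((M.1 v : ENNReal) + 1)⁻¹)

end Final

end RibbonChain

/-- Iterated integral representation of Schur multiple zeta values of ribbon type
`ν = rib(p_1,q_1 | ⋯ | p_r,q_r)`, with hook fillings `γ_i` given by the row entries
`α^{(i)}_1,…,α^{(i)}_{p_i}` and column entries `β^{(i)}_1,…,β^{(i)}_{q_i}` (encoded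
0-indexed by `α i`, `β i`); the filling `γ = γ_1 ⊔ ⋯ ⊔ γ_r` of `ν` is encoded by the
function `g` via the hypotheses `hg_row`, `hg_col`. -/
theorem schurZeta_ribbon_eq_iterated_integral
    (r : ℕ) (hr : 0 < r) (p q : ℕ → ℕ)
    (hp : ∀ i, 0 < i → i < r → 0 < p i)
    (α β : ℕ → ℕ → ℕ)
    (hα : ∀ i < r, ∀ j < p i, 0 < α i j)
    (hβ : ∀ i < r, ∀ j < q i, 0 < β i j)
    (hcornerα : ∀ i < r, 0 < p i → (q i = 0 ∨ 2 ≤ p i) → 2 ≤ α i (p i - 1))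
    (hcornerβ : 0 < q (r - 1) → 2 ≤ β (r - 1) (q (r - 1) - 1))
    (g : ℕ × ℕ → ℂ)
    (hg_row : ∀ i < r, ∀ c < p i,
      g (SMZ.ribRow q i, SMZ.ribCol r p i + c) = ((α i c : ℕ) : ℂ))
    (hg_col : ∀ i < r, ∀ d < q i,
      g (SMZ.ribRow q i + 1 + d, SMZ.ribCol r p i) = ((β i d : ℕ) : ℂ)) :
    SMZ.schurZetaOn (SMZ.ribbonDiag r p q) g =
      ((∫ z in SMZ.ribRegion r p q α β,
          ∏ v, SMZ.ribFactor r p q α β v (z v)) : ℝ) := by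
  obtain ⟨E, hE⟩ := RibbonChain.tableaux_bijective (α := α) (β := β) hp hα hβ
  rw [RibbonChain.integral_ribRegion hp hα hβ, ← E.tsum_eq, ENNReal.tsum_toReal_eq,
    Complex.ofReal_tsum, SMZ.schurZetaOn]
  · refine tsum_congr fun m => ?_
    rw [RibbonChain.prod_box hα hβ g hg_row hg_col m.1, ENNReal.toReal_prod, Complex.ofReal_prod]
    refine Finset.prod_congr rfl fun v _ => ?_
    rw [hE m v, ENNReal.toReal_inv, ENNReal.toReal_add (ENNReal.natCast_ne_top _) ENNReal.one_ne_top]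
    simp
  · intro m
    refine ENNReal.prod_ne_top fun v _ => ?_
    simp
end
end

section
/- For integers α_1,…,α_p ≥ 2, the multiple zeta-star value ζ⋆(α_1,…,α_p) equals the Schur multiple zeta value ζ_ν(γ), where ν is the ribbon with p columns in which the j-th column from the left contains α_{p+1−j}−1 boxes and consecutive columns are glued so that the top box of each column lies in the same row as, and immediately to the left of, the bottom box of the column to its right, and γ∈T(ν,ℕ) is the filling assigning the entry 2 to the bottom box of every column and the entry 1 to every other box (duality for multiple zeta-star values). -/
/-!
The proof uses connected sums with the kernel `C(m, n) = m! n! / (m + n)!`. Read from its top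
right box, the ribbon is a zigzag of columns `x₁ < … < x_{αₜ-1}`, where the top box of each column
is at most the bottom box of the preceding one. The kernel satisfies

* `∑_{n > x} C(m, n) / n = C(m, x) / m` (`tsum_conn_gt`),
* `m ∑_{0 < n ≤ x} C(m, n) / n = 1 - C(m, x)` (`mul_tsum_conn_le`), where the right side is
  symmetric, so that it also equals `x ∑_{0 < n ≤ m} C(x, n) / n`.

Let `S_t(m)` be the zeta-star sum of `α_0, …, α_{t-1}` truncated at `m`. By induction on `t`, the
sum over fillings of the first `t` columns, weighted with `1 - C(m, x)` for the last bottom entry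
`x`, is `S_t(m)`. By the second relation this weight is `m` times the sum of `C(m, n) / n` over the
entry `n ≤ x` of the next top box (`topSum_succ`). By the first relation every further box in that
column gives a factor `1 / m` (`boxSum_column`). Finally `1 - C(M, x)` at the new bottom box,
whose exponent is 2, expands into `x ∑_{0 < m ≤ M} C(m, x) / m`, which is the summation over the
next zeta-star variable (`boxSum_block`). For the untruncated sum, `1` replaces `1 - C(M, x)`.

All sums are taken in `[0, ∞]`, where they may be interchanged freely.
-/

open scoped BigOperators

noncomputable section

namespace SMZ

/-- The top row `T_c` of the (0-indexed) `c`-th column of the dual ribbon of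
`ζ⋆(α_1,…,α_p)`: the ribbon has `p` columns, the `c`-th column (from the left) having
`α_{p-c} - 1` boxes, consecutive columns being glued so that the top box of each column
lies in the same row as, and immediately to the left of, the bottom box of the column to
its right. -/
def dualTop (p : ℕ) (α : ℕ → ℕ) (c : ℕ) : ℕ :=
  ∑ m ∈ Finset.range (p - 1 - c), (α m - 2)

/-- The set of boxes of the dual ribbon of `ζ⋆(α_1,…,α_p)`. -/
def dualDiag (p : ℕ) (α : ℕ → ℕ) : Finset (ℕ × ℕ) :=
  (Finset.range p).biUnion fun c =>
    (Finset.range (α (p - 1 - c) - 1)).image fun d => (dualTop p α c + d, c)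

/-- The filling of the dual ribbon: `2` in the bottom box of every column, `1` elsewhere. -/
def dualFill (p : ℕ) (α : ℕ → ℕ) : ℕ × ℕ → ℂ := fun b =>
  if b.1 = dualTop p α b.2 + (α (p - 1 - b.2) - 1) - 1 then 2 else 1

end SMZ

namespace SMZ

open scoped ENNReal

/-! ### The connecting kernel -/

/-- The connecting kernel `m! n! / (m + n)!`. -/
def conn (m n : ℕ) : ℝ≥0∞ := (((m + n).choose n : ℕ) : ℝ≥0∞)⁻¹

lemma conn_symm (m n : ℕ) : conn m n = conn n m := by
  unfold conn
  rw [add_comm n m, Nat.choose_symm_add]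

lemma conn_zero_right (m : ℕ) : conn m 0 = 1 := by simp [conn]

lemma conn_le_one (m n : ℕ) : conn m n ≤ 1 := by
  unfold conn
  rw [ENNReal.inv_le_one]
  have : 1 ≤ (m + n).choose n := Nat.choose_pos (by omega)
  exact_mod_cast this

lemma conn_ne_top (m n : ℕ) : conn m n ≠ ⊤ :=
  ne_top_of_le_ne_top ENNReal.one_ne_top (conn_le_one m n)

lemma conn_succ (m c : ℕ) :
    m * (((c + 1 : ℕ) : ℝ≥0∞)⁻¹ * conn m (c + 1)) + conn m (c + 1) = conn m c := by
  have h := Nat.add_one_mul_choose_eq (m + c) c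
  have hp : 0 < (m + c).choose c := Nat.choose_pos (by omega)
  have hq : 0 < (m + c + 1).choose (c + 1) := Nat.choose_pos (by omega)
  unfold conn
  rw [← add_assoc]
  generalize (m + c).choose c = u at *
  generalize (m + c + 1).choose (c + 1) = v at *
  have hu : ∀ k : ℕ, 0 < k → ((k : ℕ) : ℝ≥0∞)⁻¹ = ENNReal.ofReal ((k : ℝ)⁻¹) := by
    intro k hk
    rw [ENNReal.ofReal_inv_of_pos (by positivity), ENNReal.ofReal_natCast]
  rw [hu _ hp, hu _ hq, hu _ (Nat.succ_pos c), ← ENNReal.ofReal_natCast m,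
    ← ENNReal.ofReal_mul (by positivity), ← ENNReal.ofReal_mul (by positivity),
    ← ENNReal.ofReal_add (by positivity) (by positivity)]
  congr 1
  have h' : ((m : ℝ) + c + 1) * u = v * (c + 1) := by exact_mod_cast h
  have : (u : ℝ) ≠ 0 := by positivity
  have : (v : ℝ) ≠ 0 := by positivity
  push_cast
  field_simp
  linarith

lemma conn_telescope (m n N : ℕ) :
    m * (∑ c ∈ Finset.range N, ((n + c + 1 : ℕ) : ℝ≥0∞)⁻¹ * conn m (n + c + 1))
      + conn m (n + N) = conn m n := by
  induction N with
  | zero => simp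
  | succ N ih =>
    rw [Finset.sum_range_succ, mul_add, add_assoc, ← add_assoc n N 1, conn_succ, ih]

lemma conn_tendsto {m : ℕ} (hm : 0 < m) (n : ℕ) :
    Filter.Tendsto (fun N => conn m (n + N)) Filter.atTop (nhds 0) := by
  refine tendsto_of_tendsto_of_tendsto_of_le_of_le tendsto_const_nhds
    ENNReal.tendsto_inv_nat_nhds_zero (fun _ => zero_le) (fun N => ?_)
  unfold conn
  apply ENNReal.inv_le_inv.mpr
  have h1 : (1 + (n + N)).choose (n + N) ≤ (m + (n + N)).choose (n + N) :=
    Nat.choose_le_choose _ (by omega)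
  have h2 : (1 + (n + N)).choose (n + N) = n + N + 1 := by
    rw [add_comm 1, Nat.choose_succ_self_right]
  have : N ≤ (m + (n + N)).choose (n + N) := by omega
  exact_mod_cast this

/-- The transport relation of the connecting kernel, by telescoping. -/
lemma tsum_conn_gt {m : ℕ} (hm : 0 < m) (x : ℕ) :
    (∑' n : ℕ, if 0 < n ∧ x < n then (n : ℝ≥0∞)⁻¹ * conn m n else 0)
      = (m : ℝ≥0∞)⁻¹ * conn m x := by
  have h1 : (∑' n : ℕ, if 0 < n ∧ x < n then (n : ℝ≥0∞)⁻¹ * conn m n else 0)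
      = ∑' c : ℕ, ((x + c + 1 : ℕ) : ℝ≥0∞)⁻¹ * conn m (x + c + 1) := by
    have hinj : Function.Injective (fun c : ℕ => x + c + 1) := by
      intro a b h
      simp only at h
      omega
    rw [← hinj.tsum_eq]
    · refine tsum_congr fun c => ?_
      rw [if_pos (by omega)]
    · intro n hn
      simp only [Function.mem_support, ne_eq, ite_eq_right_iff, not_forall] at hn
      obtain ⟨⟨_, h⟩, _⟩ := hn
      exact ⟨n - x - 1, by simp only; omega⟩
  have h2 : (m : ℝ≥0∞) * (∑' c : ℕ, ((x + c + 1 : ℕ) : ℝ≥0∞)⁻¹ * conn m (x + c + 1))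
      = conn m x := by
    have ht := ((ENNReal.Tendsto.const_mul (a := (m : ℝ≥0∞)) (ENNReal.tendsto_nat_tsum
      (fun c : ℕ => ((x + c + 1 : ℕ) : ℝ≥0∞)⁻¹ * conn m (x + c + 1)))
      (Or.inr (ENNReal.natCast_ne_top m)))).add (conn_tendsto hm x)
    simp only [conn_telescope, add_zero] at ht
    exact tendsto_nhds_unique ht tendsto_const_nhds
  rw [h1, ← h2, ← mul_assoc, ENNReal.inv_mul_cancel (by exact_mod_cast hm.ne')
    (ENNReal.natCast_ne_top m), one_mul]

/-- The boundary relation of the connecting kernel. The right side is symmetric in `m` and `x`. -/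
lemma mul_tsum_conn_le (m x : ℕ) :
    (m : ℝ≥0∞) * (∑' n : ℕ, if 0 < n ∧ n ≤ x then (n : ℝ≥0∞)⁻¹ * conn m n else 0)
      = 1 - conn m x := by
  have h1 : (∑' n : ℕ, if 0 < n ∧ n ≤ x then (n : ℝ≥0∞)⁻¹ * conn m n else 0)
      = ∑ c ∈ Finset.range x, ((0 + c + 1 : ℕ) : ℝ≥0∞)⁻¹ * conn m (0 + c + 1) := by
    rw [tsum_eq_sum (s := Finset.Ico 1 (x + 1)), Finset.sum_Ico_eq_sum_range]
    · refine Finset.sum_congr (by simp) fun c hc => ?_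
      simp only [Finset.mem_range] at hc
      rw [if_pos (by omega), show 1 + c = 0 + c + 1 by omega]
    · intro n hn
      rw [if_neg]
      simp only [Finset.mem_Ico] at hn
      omega
  have h2 := conn_telescope m 0 x
  rw [zero_add, conn_zero_right] at h2
  rw [h1, ← h2, ENNReal.add_sub_cancel_right (conn_ne_top m x)]

/-! ### The zeta-star side -/

/-- The truncated zeta-star sum `∑ ∏ mᵢ ^ (-αᵢ)` over `0 < m₀ ≤ … ≤ m_{t-1} ≤ M`. -/
def starSum (α : ℕ → ℕ) : ℕ → ℕ → ℝ≥0∞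
  | 0, _ => 1
  | t + 1, M => ∑' m : ℕ, if 0 < m ∧ m ≤ M then (m : ℝ≥0∞)⁻¹ ^ α t * starSum α t m else 0

open Classical in
/-- Summation over the last, largest variable `m` separately. -/
lemma tsum_snoc (α : ℕ → ℕ) (t : ℕ) (A : ℕ → Prop) :
    (∑' f : Fin (t + 1) → ℕ, if (Monotone f ∧ ∀ i, 0 < f i) ∧ A (f (Fin.last t)) then
        ∏ i, (f i : ℝ≥0∞)⁻¹ ^ α i else 0) =
      ∑' m : ℕ, if 0 < m ∧ A m then (m : ℝ≥0∞)⁻¹ ^ α t *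
        (∑' f : Fin t → ℕ, if (Monotone f ∧ ∀ i, 0 < f i) ∧ ∀ i, f i ≤ m then
          ∏ i, (f i : ℝ≥0∞)⁻¹ ^ α i else 0) else 0 := by
  rw [← (Fin.snocEquiv (fun _ : Fin (t + 1) => ℕ)).tsum_eq, ENNReal.summable.tsum_prod' (fun _ => ENNReal.summable)]
  refine tsum_congr fun m => ?_
  have key : ∀ f : Fin t → ℕ,
      ((Monotone (Fin.snoc f m : Fin (t + 1) → ℕ) ∧
        ∀ i, 0 < (Fin.snoc f m : Fin (t + 1) → ℕ) i) ↔
        (0 < m ∧ (Monotone f ∧ ∀ i, 0 < f i) ∧ ∀ i, f i ≤ m)) := by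
    intro f
    constructor
    · rintro ⟨h1, h2⟩
      refine ⟨by simpa using h2 (Fin.last t), ⟨?_, ?_⟩, ?_⟩
      · intro i j hij
        simpa using h1 (Fin.castSucc_le_castSucc_iff.mpr hij)
      · intro i
        simpa using h2 i.castSucc
      · intro i
        simpa using h1 (Fin.le_last i.castSucc)
    · rintro ⟨hm, ⟨h1, h2⟩, h3⟩
      refine ⟨?_, ?_⟩
      · intro i j
        refine Fin.lastCases ?_ (fun j => ?_) j <;> refine Fin.lastCases ?_ (fun i => ?_) i
        · simp
        · intro _; simpa using h3 i
        · intro h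
          exact absurd h (by simp [Fin.le_def])
        · intro h
          simpa using h1 (Fin.castSucc_le_castSucc_iff.mp h)
      · intro i
        refine Fin.lastCases ?_ (fun i => ?_) i
        · simpa using hm
        · simpa using h2 i
  have key' : ∀ f : Fin t → ℕ,
      (((Monotone (Fin.snocEquiv (fun _ : Fin (t + 1) => ℕ) (m, f)) ∧
        ∀ i, 0 < Fin.snocEquiv (fun _ : Fin (t + 1) => ℕ) (m, f) i) ∧
        A (Fin.snocEquiv (fun _ : Fin (t + 1) => ℕ) (m, f) (Fin.last t))) ↔
        ((0 < m ∧ (Monotone f ∧ ∀ i, 0 < f i) ∧ ∀ i, f i ≤ m) ∧ A m)) := by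
    intro f
    have hl : Fin.snocEquiv (fun _ : Fin (t + 1) => ℕ) (m, f) (Fin.last t) = m :=
      Fin.snoc_last (α := fun _ => ℕ) m f
    rw [hl]
    exact and_congr_left fun _ => key f
  split_ifs with hm
  · rw [← ENNReal.tsum_mul_left]
    refine tsum_congr fun f => ?_
    refine (if_congr (key' f) rfl rfl).trans ?_
    simp only [hm, true_and, and_true, mul_ite, mul_zero]
    congr 1
    change ∏ i, (((Fin.snoc f m : Fin (t + 1) → ℕ) i : ℕ) : ℝ≥0∞)⁻¹ ^ α i = _
    rw [Fin.prod_univ_castSucc]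
    simp [mul_comm]
  · refine ENNReal.tsum_eq_zero.mpr fun f => ?_
    refine (if_congr (key' f) rfl rfl).trans (if_neg ?_)
    tauto

open Classical in
lemma tsum_bounded_eq_starSum (α : ℕ → ℕ) (t M : ℕ) :
    (∑' f : Fin t → ℕ, if (Monotone f ∧ ∀ i, 0 < f i) ∧ ∀ i, f i ≤ M then
      ∏ i, (f i : ℝ≥0∞)⁻¹ ^ α i else 0) = starSum α t M := by
  induction t generalizing M with
  | zero =>
    rw [tsum_eq_single (fun i => i.elim0) (fun f hf => absurd (Subsingleton.elim _ _) hf)]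
    simp [starSum, Subsingleton.monotone]
  | succ t ih =>
    have h := tsum_snoc α t (fun m => m ≤ M)
    simp only [ih] at h
    rw [starSum, ← h]
    refine tsum_congr fun f => ?_
    congr 1
    refine propext (and_congr_right fun hf => ⟨fun h => h _, fun h i => ?_⟩)
    exact (hf.1 (Fin.le_last i)).trans h

lemma tsum_monotone_succ (α : ℕ → ℕ) (t : ℕ) :
    (∑' f : {f : Fin (t + 1) → ℕ // Monotone f ∧ ∀ i, 0 < f i},
      ∏ i, (f.1 i : ℝ≥0∞)⁻¹ ^ α i) =
      ∑' m : ℕ, if 0 < m then (m : ℝ≥0∞)⁻¹ ^ α t * starSum α t m else 0 := by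
  classical
  have h := tsum_snoc α t (fun _ => True)
  simp only [tsum_bounded_eq_starSum, and_true] at h
  rw [← h]
  have := tsum_subtype {f : Fin (t + 1) → ℕ | Monotone f ∧ ∀ i, 0 < f i}
    (fun f => ∏ i, (f i : ℝ≥0∞)⁻¹ ^ α i)
  refine Eq.trans this (tsum_congr fun f => ?_)
  simp [Set.indicator]

/-! ### Adding a box to a diagram -/

/-- Fubini for tableaux when a box `b` is added whose only constraint (besides positivity) is a
relation `R` with the entry of one other box `a`. -/
lemma tsum_insert (D : Finset (ℕ × ℕ)) (a b : ℕ × ℕ) (R : ℕ → ℕ → Prop)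
    [∀ x n, Decidable (R x n)] (hab : a ≠ b) (hb : b ∉ D)
    (H : ∀ m, IsSSYTOn (insert b D) m ↔
      IsSSYTOn D (Function.update m b 0) ∧ 0 < m b ∧ R (m a) (m b))
    (F : (ℕ × ℕ → ℕ) → ℝ≥0∞) :
    (∑' M : {m // IsSSYTOn (insert b D) m}, F M.1) =
      ∑' M : {m // IsSSYTOn D m}, ∑' n : ℕ,
        if 0 < n ∧ R (M.1 a) n then F (Function.update M.1 b n) else 0 := by
  let e : (Σ M : {m // IsSSYTOn D m}, {n : ℕ // 0 < n ∧ R (M.1 a) n}) ≃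
      {m // IsSSYTOn (insert b D) m} :=
    { toFun := fun q => ⟨Function.update q.1.1 b q.2.1, by
        rw [H]
        have h0 : Function.update q.1.1 b 0 = q.1.1 := by
          rw [Function.update_eq_self_iff]
          exact (q.1.2.zero_off b hb).symm
        refine ⟨?_, ?_, ?_⟩
        · rw [Function.update_idem, h0]
          exact q.1.2
        · simpa using q.2.2.1
        · simpa [Function.update_of_ne hab] using q.2.2.2⟩
      invFun := fun M => ⟨⟨Function.update M.1 b 0, ((H _).1 M.2).1⟩, ⟨M.1 b, by
        have := ((H _).1 M.2).2
        simpa [Function.update_of_ne hab] using this⟩⟩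
      left_inv := by
        rintro ⟨⟨M, hM⟩, ⟨n, hn⟩⟩
        have h0 : Function.update M b 0 = M := by
          rw [Function.update_eq_self_iff]
          exact (hM.zero_off b hb).symm
        have h1 : Function.update (Function.update M b n) b 0 = M := by
          rw [Function.update_idem, h0]
        simp only
        refine Sigma.ext (Subtype.ext h1) ?_
        simp only [Function.update_self]
        refine (Subtype.heq_iff_coe_eq fun x => ?_).mpr rfl
        rw [h1]
      right_inv := by
        rintro ⟨M, hM⟩
        simp }
  rw [← e.tsum_eq, ENNReal.tsum_sigma']
  refine tsum_congr fun M => ?_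
  have := tsum_subtype {n : ℕ | 0 < n ∧ R (M.1 a) n} (fun n => F (Function.update M.1 b n))
  refine Eq.trans this (tsum_congr fun n => ?_)
  simp [Set.indicator]

/-- The weighted sum of `g (M a)` over the tableaux `M` on `D`: every box `b` other than `a`
contributes `(M b) ^ (-k b)`, and the whole contribution of `a` is carried by `g`. -/
def boxSum (k : ℕ × ℕ → ℕ) (D : Finset (ℕ × ℕ)) (a : ℕ × ℕ) (g : ℕ → ℝ≥0∞) : ℝ≥0∞ :=
  ∑' M : {m // IsSSYTOn D m}, (∏ b ∈ D.erase a, (M.1 b : ℝ≥0∞)⁻¹ ^ k b) * g (M.1 a)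

lemma boxSum_congr (k : ℕ × ℕ → ℕ) {D : Finset (ℕ × ℕ)} {a : ℕ × ℕ} (ha : a ∈ D)
    {g g' : ℕ → ℝ≥0∞} (h : ∀ x, 0 < x → g x = g' x) :
    boxSum k D a g = boxSum k D a g' :=
  tsum_congr fun M => by rw [h _ (M.2.pos a ha)]

lemma boxSum_const_mul (k : ℕ × ℕ → ℕ) (D : Finset (ℕ × ℕ)) (a : ℕ × ℕ)
    (g : ℕ → ℝ≥0∞) (c : ℝ≥0∞) :
    boxSum k D a (fun x => c * g x) = c * boxSum k D a g := by
  unfold boxSum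
  rw [← ENNReal.tsum_mul_left]
  exact tsum_congr fun M => by ring

lemma boxSum_tsum (k : ℕ × ℕ → ℕ) (D : Finset (ℕ × ℕ)) (a : ℕ × ℕ)
    (g : ℕ → ℕ → ℝ≥0∞) :
    boxSum k D a (fun x => ∑' m, g m x) = ∑' m, boxSum k D a (g m) := by
  unfold boxSum
  rw [ENNReal.tsum_comm]
  exact tsum_congr fun M => by rw [ENNReal.tsum_mul_left]

lemma prod_update_erase (k : ℕ × ℕ → ℕ) {D : Finset (ℕ × ℕ)} {b : ℕ × ℕ} (hb : b ∉ D)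
    (M : ℕ × ℕ → ℕ) (n : ℕ) :
    ∏ c ∈ (insert b D).erase b, ((Function.update M b n) c : ℝ≥0∞)⁻¹ ^ k c =
      ∏ c ∈ D, (M c : ℝ≥0∞)⁻¹ ^ k c := by
  rw [Finset.erase_insert hb]
  refine Finset.prod_congr rfl fun c hc => ?_
  rw [Function.update_of_ne (by rintro rfl; exact hb hc)]

/-- The sum over the entry of a new box `b`, attached to the box `a`, is absorbed in the function
carried by `a`. -/
lemma boxSum_insert (k : ℕ × ℕ → ℕ) (D : Finset (ℕ × ℕ)) (a b : ℕ × ℕ) (R : ℕ → ℕ → Prop)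
    [∀ x n, Decidable (R x n)] (ha : a ∈ D) (hb : b ∉ D)
    (H : ∀ m, IsSSYTOn (insert b D) m ↔
      IsSSYTOn D (Function.update m b 0) ∧ 0 < m b ∧ R (m a) (m b))
    (g : ℕ → ℝ≥0∞) :
    boxSum k (insert b D) b g =
      boxSum k D a (fun x => (x : ℝ≥0∞)⁻¹ ^ k a *
        ∑' n : ℕ, if 0 < n ∧ R x n then g n else 0) := by
  have hab : a ≠ b := by rintro rfl; exact hb ha
  unfold boxSum
  rw [tsum_insert D a b R hab hb H
    (fun m => (∏ b' ∈ (insert b D).erase b, (m b' : ℝ≥0∞)⁻¹ ^ k b') * g (m b))]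
  refine tsum_congr fun M => ?_
  rw [← mul_assoc, Finset.prod_erase_mul D (fun b => (M.1 b : ℝ≥0∞)⁻¹ ^ k b) ha,
    ← ENNReal.tsum_mul_left]
  refine tsum_congr fun n => ?_
  rw [prod_update_erase k hb]
  simp

/-- The conditions on a tableau on `insert b D` that involve the entry of `b`. -/
lemma isSSYTOn_insert {D : Finset (ℕ × ℕ)} {i j : ℕ} (hb : (i, j) ∉ D) (m : ℕ × ℕ → ℕ) :
    IsSSYTOn (insert (i, j) D) m ↔ IsSSYTOn D (Function.update m (i, j) 0) ∧ 0 < m (i, j) ∧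
      ((i, j + 1) ∈ D → m (i, j) ≤ m (i, j + 1)) ∧
      ((i + 1, j) ∈ D → m (i, j) < m (i + 1, j)) ∧
      (∀ j', j' + 1 = j → (i, j') ∈ D → m (i, j') ≤ m (i, j)) ∧
      (∀ i', i' + 1 = i → (i', j) ∈ D → m (i', j) < m (i, j)) := by
  have hup : ∀ q, q ≠ (i, j) → Function.update m (i, j) 0 q = m q := fun q hq =>
    Function.update_of_ne hq _ _
  have hne : ∀ q ∈ D, q ≠ (i, j) := by rintro q hq rfl; exact hb hq
  constructor
  · intro h
    refine ⟨⟨?_, ?_, ?_, ?_⟩, h.pos _ (by simp), ?_, ?_, ?_, ?_⟩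
    · intro q hq
      by_cases hqb : q = (i, j)
      · simp [hqb]
      · rw [hup q hqb]
        exact h.zero_off q (by simp [hqb, hq])
    · intro q hq
      rw [hup q (hne q hq)]
      exact h.pos q (by simp [hq])
    · intro i' j' h1 h2
      rw [hup _ (hne _ h1), hup _ (hne _ h2)]
      exact h.row_le _ _ (by simp [h1]) (by simp [h2])
    · intro i' j' h1 h2
      rw [hup _ (hne _ h1), hup _ (hne _ h2)]
      exact h.col_lt _ _ (by simp [h1]) (by simp [h2])
    · intro h1
      exact h.row_le _ _ (by simp) (by simp [h1])
    · intro h1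
      exact h.col_lt _ _ (by simp) (by simp [h1])
    · rintro j' rfl h1
      exact h.row_le _ _ (by simp [h1]) (by simp)
    · rintro i' rfl h1
      exact h.col_lt _ _ (by simp [h1]) (by simp)
  · rintro ⟨h, h0, hr, hd, hl, hu⟩
    refine ⟨?_, ?_, ?_, ?_⟩
    · intro q hq
      simp only [Finset.mem_insert, not_or] at hq
      rw [← hup q hq.1]
      exact h.zero_off q hq.2
    · intro q hq
      rcases Finset.mem_insert.mp hq with rfl | hq
      · exact h0
      · rw [← hup q (hne q hq)]
        exact h.pos q hq
    · intro i' j' h1 h2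
      rw [Finset.mem_insert] at h1 h2
      rcases h1 with h1 | h1 <;> rcases h2 with h2 | h2
      · simp only [Prod.mk.injEq] at h1 h2
        omega
      · obtain ⟨rfl, rfl⟩ := Prod.mk.inj h1
        exact hr h2
      · obtain ⟨rfl, rfl⟩ := Prod.mk.inj h2
        exact hl _ rfl h1
      · rw [← hup _ (hne _ h1), ← hup _ (hne _ h2)]
        exact h.row_le _ _ h1 h2
    · intro i' j' h1 h2
      rw [Finset.mem_insert] at h1 h2
      rcases h1 with h1 | h1 <;> rcases h2 with h2 | h2
      · simp only [Prod.mk.injEq] at h1 h2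
        omega
      · obtain ⟨rfl, rfl⟩ := Prod.mk.inj h1
        exact hd h2
      · obtain ⟨rfl, rfl⟩ := Prod.mk.inj h2
        exact hu _ rfl h1
      · rw [← hup _ (hne _ h1), ← hup _ (hne _ h2)]
        exact h.col_lt _ _ h1 h2

/-! ### The dual ribbon, built box by box -/

/-- The row of the top box of the column belonging to `α t`. -/
def topRow (α : ℕ → ℕ) (t : ℕ) : ℕ := ∑ m ∈ Finset.range t, (α m - 2)

/-- The box at depth `e` in the column belonging to `α t`. -/
def ribbonBox (p : ℕ) (α : ℕ → ℕ) (t e : ℕ) : ℕ × ℕ := (topRow α t + e, p - 1 - t)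

/-- The part of the dual ribbon formed by the complete columns of `α 0, …, α (t - 1)` and the
top `e` boxes of the column of `α t`. -/
def partDiag (p : ℕ) (α : ℕ → ℕ) (t e : ℕ) : Finset (ℕ × ℕ) :=
  (dualDiag p α).filter fun b => p - 1 - b.2 < t ∨ (p - 1 - b.2 = t ∧ b.1 < topRow α t + e)

/-- The exponents of the dual ribbon as natural numbers. -/
def dualExp (p : ℕ) (α : ℕ → ℕ) (b : ℕ × ℕ) : ℕ :=
  if b.1 = dualTop p α b.2 + (α (p - 1 - b.2) - 1) - 1 then 2 else 1

lemma mem_dualDiag {p : ℕ} {α : ℕ → ℕ} {i c : ℕ} :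
    (i, c) ∈ dualDiag p α ↔ c < p ∧ topRow α (p - 1 - c) ≤ i ∧
      i < topRow α (p - 1 - c) + (α (p - 1 - c) - 1) := by
  simp only [dualDiag, Finset.mem_biUnion, Finset.mem_range, Finset.mem_image, Prod.mk.injEq]
  constructor
  · rintro ⟨c', hc, d, hd, rfl, rfl⟩
    refine ⟨hc, ?_, ?_⟩ <;> simp only [dualTop, topRow] <;> omega
  · rintro ⟨hc, h1, h2⟩
    refine ⟨c, hc, i - topRow α (p - 1 - c), by omega, ?_, rfl⟩
    simp only [dualTop, topRow] at *
    omega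

lemma mem_partDiag {p : ℕ} {α : ℕ → ℕ} {t e i c : ℕ} :
    (i, c) ∈ partDiag p α t e ↔ (c < p ∧ topRow α (p - 1 - c) ≤ i ∧
      i < topRow α (p - 1 - c) + (α (p - 1 - c) - 1)) ∧
      (p - 1 - c < t ∨ (p - 1 - c = t ∧ i < topRow α t + e)) := by
  simp only [partDiag, Finset.mem_filter, mem_dualDiag]

lemma topRow_succ (α : ℕ → ℕ) (t : ℕ) : topRow α (t + 1) = topRow α t + (α t - 2) :=
  Finset.sum_range_succ _ _

lemma partDiag_zero (p : ℕ) (α : ℕ → ℕ) : partDiag p α 0 0 = ∅ := by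
  ext ⟨i, c⟩
  rw [mem_partDiag]
  simp only [Finset.notMem_empty, iff_false]
  rintro ⟨⟨_, h, _⟩, h1 | ⟨h1, h2⟩⟩
  · omega
  · rw [h1] at h
    omega

lemma partDiag_full {p : ℕ} (α : ℕ → ℕ) : partDiag p α p 0 = dualDiag p α := by
  ext ⟨i, c⟩
  rw [mem_partDiag, mem_dualDiag]
  refine ⟨fun h => h.1, fun h => ⟨h, Or.inl ?_⟩⟩
  omega

lemma partDiag_column (p : ℕ) (α : ℕ → ℕ) (t : ℕ) :
    partDiag p α (t + 1) 0 = partDiag p α t (α t - 1) := by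
  ext ⟨i, c⟩
  rw [mem_partDiag, mem_partDiag]
  refine and_congr_right fun h => ⟨?_, ?_⟩
  · rintro (h1 | ⟨h1, h2⟩)
    · by_cases h3 : p - 1 - c < t
      · exact Or.inl h3
      · have h4 : p - 1 - c = t := by omega
        rw [h4] at h
        exact Or.inr ⟨h4, h.2.2⟩
    · rw [h1] at h
      omega
  · omega

lemma partDiag_insert {p : ℕ} {α : ℕ → ℕ} {t e : ℕ} (ht : t < p) (he : e < α t - 1) :
    partDiag p α t (e + 1) = insert (ribbonBox p α t e) (partDiag p α t e) := by
  have hpt : p - 1 - (p - 1 - t) = t := by omega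
  ext ⟨i, c⟩
  rw [Finset.mem_insert, mem_partDiag, mem_partDiag]
  simp only [ribbonBox, Prod.mk.injEq]
  constructor
  · rintro ⟨h, h1 | ⟨h1, h2⟩⟩
    · exact Or.inr ⟨h, Or.inl h1⟩
    · by_cases h3 : i = topRow α t + e
      · left
        omega
      · right
        exact ⟨h, Or.inr ⟨h1, by omega⟩⟩
  · rintro (⟨rfl, rfl⟩ | ⟨h, h1⟩)
    · rw [hpt]
      omega
    · exact ⟨h, by omega⟩

lemma ribbonBox_notMem {p : ℕ} {α : ℕ → ℕ} {t e : ℕ} (ht : t < p) :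
    ribbonBox p α t e ∉ partDiag p α t e := by
  have hpt : p - 1 - (p - 1 - t) = t := by omega
  rw [ribbonBox, mem_partDiag, hpt]
  omega

lemma ribbonBox_mem {p : ℕ} {α : ℕ → ℕ} {t e : ℕ} (ht : t < p) (he : e < α t - 1) :
    ribbonBox p α t e ∈ partDiag p α t (e + 1) := by
  rw [partDiag_insert ht he]
  exact Finset.mem_insert_self _ _

lemma dualExp_ribbonBox {p : ℕ} {α : ℕ → ℕ} {t e : ℕ} (ht : t < p) (he : e < α t - 1) :
    dualExp p α (ribbonBox p α t e) = if e = α t - 2 then 2 else 1 := by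
  have hpt : p - 1 - (p - 1 - t) = t := by omega
  simp only [dualExp, ribbonBox, dualTop, topRow, hpt]
  congr 1
  refine propext ?_
  omega

/-- The column of `α t` has no box to the left in the part of the ribbon built so far. -/
lemma left_notMem {p : ℕ} {α : ℕ → ℕ} {t e i j : ℕ} (ht : t < p) (hj : j + 1 = p - 1 - t) :
    (i, j) ∉ partDiag p α t e := by
  rw [mem_partDiag]
  omega

lemma down_notMem {p : ℕ} {α : ℕ → ℕ} {t e : ℕ} (ht : t < p) :
    (topRow α t + e + 1, p - 1 - t) ∉ partDiag p α t e := by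
  have hpt : p - 1 - (p - 1 - t) = t := by omega
  rw [mem_partDiag, hpt]
  omega

/-- Boxes of a column other than the top one have no right neighbour. -/
lemma right_notMem {p : ℕ} {α : ℕ → ℕ} (hα : ∀ i < p, 2 ≤ α i) {t e : ℕ} (ht : t < p) :
    (topRow α t + (e + 1), p - 1 - t + 1) ∉ partDiag p α t (e + 1) := by
  rw [mem_partDiag]
  rintro ⟨⟨h1, h2, h3⟩, h4⟩
  obtain ⟨s, rfl⟩ : ∃ s, t = s + 1 := ⟨t - 1, by omega⟩
  have hs : p - 1 - (p - 1 - (s + 1) + 1) = s := by omega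
  rw [topRow_succ] at h2 h3
  rw [hs] at h2 h3
  have := hα s (by omega)
  omega

lemma isSSYTOn_below {p : ℕ} {α : ℕ → ℕ} (hα : ∀ i < p, 2 ≤ α i) {t e : ℕ} (ht : t < p)
    (he : e + 1 < α t - 1) (m : ℕ × ℕ → ℕ) :
    IsSSYTOn (insert (ribbonBox p α t (e + 1)) (partDiag p α t (e + 1))) m ↔
      IsSSYTOn (partDiag p α t (e + 1)) (Function.update m (ribbonBox p α t (e + 1)) 0) ∧
      0 < m (ribbonBox p α t (e + 1)) ∧
      m (ribbonBox p α t e) < m (ribbonBox p α t (e + 1)) := by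
  have h1 := ribbonBox_notMem (α := α) (e := e + 1) ht
  have hm := ribbonBox_mem ht (show e < α t - 1 by omega)
  unfold ribbonBox at *
  rw [isSSYTOn_insert h1]
  refine and_congr_right fun _ => and_congr_right fun _ => ⟨fun h => ?_, fun h => ?_⟩
  · exact h.2.2.2 _ rfl hm
  · refine ⟨fun h' => absurd h' (right_notMem hα ht), fun h' => absurd h' (down_notMem ht),
      fun j hj h' => absurd h' (left_notMem ht hj), fun i hi h' => ?_⟩
    obtain rfl : i = topRow α t + e := by omega
    exact h

lemma isSSYTOn_left {p : ℕ} {α : ℕ → ℕ} (hα : ∀ i < p, 2 ≤ α i) {t : ℕ} (ht : t + 1 < p)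
    (m : ℕ × ℕ → ℕ) :
    IsSSYTOn (insert (ribbonBox p α (t + 1) 0) (partDiag p α (t + 1) 0)) m ↔
      IsSSYTOn (partDiag p α (t + 1) 0) (Function.update m (ribbonBox p α (t + 1) 0) 0) ∧
      0 < m (ribbonBox p α (t + 1) 0) ∧
      m (ribbonBox p α (t + 1) 0) ≤ m (ribbonBox p α t (α t - 2)) := by
  have h2 := hα t (by omega)
  have h1 := ribbonBox_notMem (α := α) (e := 0) ht
  have hm := ribbonBox_mem (show t < p by omega) (show α t - 2 < α t - 1 by omega)
  have hd := down_notMem (α := α) (e := 0) ht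
  rw [show α t - 2 + 1 = α t - 1 by omega, ← partDiag_column] at hm
  have hpt : p - 1 - (p - 1 - (t + 1)) = t + 1 := by omega
  have hb : ribbonBox p α t (α t - 2) = (topRow α (t + 1) + 0, p - 1 - (t + 1) + 1) := by
    simp only [ribbonBox, topRow_succ, Prod.mk.injEq]
    omega
  rw [hb] at hm ⊢
  simp only [show ribbonBox p α (t + 1) 0 = (topRow α (t + 1) + 0, p - 1 - (t + 1)) from rfl]
    at *
  rw [isSSYTOn_insert h1]
  refine and_congr_right fun _ => and_congr_right fun _ => ⟨fun h => h.1 hm, fun h => ?_⟩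
  refine ⟨fun _ => h, fun h' => absurd h' hd,
    fun j hj h' => absurd h' (left_notMem ht hj), fun i hi h' => ?_⟩
  rw [mem_partDiag, hpt] at h'
  omega

/-! ### Transport along the ribbon -/

lemma boxSum_first {p : ℕ} {α : ℕ → ℕ} (hp : 0 < p) (hα : ∀ i < p, 2 ≤ α i) (m : ℕ)
    (hm : 0 < m) :
    boxSum (dualExp p α) (partDiag p α 0 1) (ribbonBox p α 0 0)
      (fun x => (x : ℝ≥0∞)⁻¹ * conn m x) = (m : ℝ≥0∞)⁻¹ * starSum α 0 m := by
  have h2 := hα 0 hp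
  have hb := ribbonBox_notMem (α := α) (e := 0) hp
  rw [partDiag_insert hp (by omega)]
  rw [partDiag_zero] at hb ⊢
  unfold boxSum
  rw [tsum_insert ∅ (ribbonBox p α 0 1) (ribbonBox p α 0 0) (fun _ _ => True)
    (by simp [ribbonBox]) hb (fun m' => ?_) (fun M =>
      (∏ b ∈ (insert (ribbonBox p α 0 0) (∅ : Finset (ℕ × ℕ))).erase (ribbonBox p α 0 0),
        (M b : ℝ≥0∞)⁻¹ ^ dualExp p α b) *
      ((M (ribbonBox p α 0 0) : ℝ≥0∞)⁻¹ * conn m (M (ribbonBox p α 0 0))))]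
  · have hz : IsSSYTOn ∅ (fun _ => 0) := ⟨by simp, by simp, by simp, by simp⟩
    rw [tsum_eq_single ⟨fun _ => 0, hz⟩]
    · have := tsum_conn_gt hm 0
      rw [conn_zero_right] at this
      simp only [starSum, ← this]
      refine tsum_congr fun n => ?_
      simp
    · rintro ⟨M, hM⟩ h
      exact absurd (Subtype.ext (funext fun q => hM.zero_off q (by simp))) h
  · unfold ribbonBox at *
    rw [isSSYTOn_insert hb]
    simp

/-- The property carried along the ribbon: once the top box of the column of `α t` is placed, its
connected sum with `m` is `1 / m` times the zeta-star sum of `α 0, …, α (t - 1)` truncated at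
`m`. -/
def TopSum (p : ℕ) (α : ℕ → ℕ) (t : ℕ) : Prop :=
  ∀ m : ℕ, 0 < m → boxSum (dualExp p α) (partDiag p α t 1) (ribbonBox p α t 0)
    (fun x => (x : ℝ≥0∞)⁻¹ * conn m x) = (m : ℝ≥0∞)⁻¹ * starSum α t m

/-- Each further box of the column of `α t` produces a factor `1 / m` by the transport
relation. -/
lemma boxSum_column {p : ℕ} {α : ℕ → ℕ} (hα : ∀ i < p, 2 ≤ α i) {t : ℕ} (ht : t < p)
    (H : TopSum p α t) (m : ℕ) (hm : 0 < m) (e : ℕ) (he : e < α t - 1) :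
    boxSum (dualExp p α) (partDiag p α t (e + 1)) (ribbonBox p α t e)
      (fun x => (x : ℝ≥0∞)⁻¹ * conn m x) = (m : ℝ≥0∞)⁻¹ ^ (e + 1) * starSum α t m := by
  induction e with
  | zero => simpa using H m hm
  | succ e ih =>
    rw [partDiag_insert ht he, boxSum_insert _ _ (ribbonBox p α t e) _ (fun x n => x < n)
      (ribbonBox_mem ht (by omega)) (ribbonBox_notMem ht) (isSSYTOn_below hα ht he)]
    simp only [tsum_conn_gt hm]
    rw [dualExp_ribbonBox ht (by omega), if_neg (by omega)]
    have := boxSum_const_mul (dualExp p α) (partDiag p α t (e + 1)) (ribbonBox p α t e)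
      (fun x => (x : ℝ≥0∞)⁻¹ * conn m x) (m : ℝ≥0∞)⁻¹
    rw [ih (by omega)] at this
    rw [pow_succ' _ (e + 1), mul_assoc, ← this]
    congr 1
    funext x
    ring

open Classical in
/-- Completing the column of `α t`: the second power of the bottom entry `x` turns the sum over
`m` of `conn x m / m` into the summation over the next zeta-star variable. The condition `A` is
`m ≤ M` for a truncated sum, and empty for the full one. -/
lemma boxSum_block {p : ℕ} {α : ℕ → ℕ} (hα : ∀ i < p, 2 ≤ α i) {t : ℕ} (ht : t < p)
    (H : TopSum p α t) (A : ℕ → Prop) :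
    boxSum (dualExp p α) (partDiag p α (t + 1) 0) (ribbonBox p α t (α t - 2))
      (fun x => (x : ℝ≥0∞)⁻¹ ^ 2 *
        (x * ∑' m : ℕ, if 0 < m ∧ A m then (m : ℝ≥0∞)⁻¹ * conn x m else 0)) =
      ∑' m : ℕ, if 0 < m ∧ A m then (m : ℝ≥0∞)⁻¹ ^ α t * starSum α t m else 0 := by
  have h2 := hα t ht
  have hc : partDiag p α (t + 1) 0 = partDiag p α t (α t - 2 + 1) := by
    rw [partDiag_column, show α t - 2 + 1 = α t - 1 by omega]
  have hmem := ribbonBox_mem ht (show α t - 2 < α t - 1 by omega)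
  rw [hc, boxSum_congr (g' := fun x => ∑' m : ℕ, (if 0 < m ∧ A m then (m : ℝ≥0∞)⁻¹ else 0) *
    ((x : ℝ≥0∞)⁻¹ * conn m x)) _ hmem, boxSum_tsum]
  · refine tsum_congr fun m => ?_
    rw [boxSum_const_mul]
    split_ifs with hm
    · rw [boxSum_column hα ht H m hm.1 _ (by omega), ← mul_assoc, ← pow_succ']
      congr 2
      omega
    · simp
  · intro x hx
    rw [← mul_assoc, pow_two, mul_assoc (x : ℝ≥0∞)⁻¹, ENNReal.inv_mul_cancel
      (by exact_mod_cast hx.ne') (ENNReal.natCast_ne_top x), mul_one, ← ENNReal.tsum_mul_left]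
    refine tsum_congr fun m => ?_
    rw [conn_symm m x]
    split_ifs
    · ring
    · simp

/-- Passing from a column to the next: both `∑_{0 < n ≤ x} conn m n / n` and
`∑_{0 < n ≤ m} conn x n / n` are multiples of `1 - conn m x`. -/
lemma topSum_succ {p : ℕ} {α : ℕ → ℕ} (hα : ∀ i < p, 2 ≤ α i) {t : ℕ} (ht : t + 1 < p)
    (H : TopSum p α t) : TopSum p α (t + 1) := by
  intro m hm
  have h2 := hα t (by omega)
  have h3 := hα (t + 1) ht
  have hmem := ribbonBox_mem (show t < p by omega) (show α t - 2 < α t - 1 by omega)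
  rw [show α t - 2 + 1 = α t - 1 by omega, ← partDiag_column] at hmem
  have hblock := boxSum_block hα (show t < p by omega) H (fun n => n ≤ m)
  rw [partDiag_insert ht (by omega), boxSum_insert _ _ (ribbonBox p α t (α t - 2)) _
    (fun x n => n ≤ x) hmem (ribbonBox_notMem ht) (isSSYTOn_left hα ht), starSum]
  rw [dualExp_ribbonBox (by omega) (by omega), if_pos rfl]
  refine Eq.trans ?_ (congrArg ((m : ℝ≥0∞)⁻¹ * ·) (Eq.trans hblock ?_))
  · rw [← boxSum_const_mul]
    congr 1
    funext x
    have hx := mul_tsum_conn_le x m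
    rw [conn_symm, ← mul_tsum_conn_le m x] at hx
    rw [mul_left_comm]
    congr 1
    have e1 : (∑' n : ℕ, if 0 < n ∧ n ≤ x then (n : ℝ≥0∞)⁻¹ * conn m n else 0) =
        (m : ℝ≥0∞)⁻¹ * (m * ∑' n : ℕ, if 0 < n ∧ n ≤ x then (n : ℝ≥0∞)⁻¹ * conn m n else 0) := by
      rw [← mul_assoc, ENNReal.inv_mul_cancel (by exact_mod_cast hm.ne')
        (ENNReal.natCast_ne_top m), one_mul]
    rw [e1, ← hx]
    congr! 5
  · refine tsum_congr fun n => ?_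
    congr 1

lemma topSum {p : ℕ} {α : ℕ → ℕ} (hα : ∀ i < p, 2 ≤ α i) (t : ℕ) (ht : t < p) :
    TopSum p α t := by
  induction t with
  | zero => exact boxSum_first ht hα
  | succ t ih => exact topSum_succ hα ht (ih (by omega))

/-- The duality as an identity of sums in `[0, ∞]`. -/
lemma tsum_star_eq_tsum_ribbon (p : ℕ) (α : ℕ → ℕ) (hα : ∀ i < p, 2 ≤ α i) :
    (∑' f : {f : Fin p → ℕ // Monotone f ∧ ∀ i, 0 < f i}, ∏ i, (f.1 i : ℝ≥0∞)⁻¹ ^ α i) =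
      ∑' M : {m // IsSSYTOn (dualDiag p α) m},
        ∏ b ∈ dualDiag p α, (M.1 b : ℝ≥0∞)⁻¹ ^ dualExp p α b := by
  cases p with
  | zero =>
    have h1 : dualDiag 0 α = ∅ := by simp [dualDiag]
    have hz : IsSSYTOn ∅ (fun _ => 0) := ⟨by simp, by simp, by simp, by simp⟩
    rw [h1, tsum_eq_single (⟨fun _ => 0, hz⟩ : {m // IsSSYTOn ∅ m}),
      tsum_eq_single (⟨fun i => i.elim0, Subsingleton.monotone _, fun i => i.elim0⟩ :
        {f : Fin 0 → ℕ // Monotone f ∧ ∀ i, 0 < f i})]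
    · simp
    · intro f h
      exact absurd (Subtype.ext (Subsingleton.elim _ _)) h
    · rintro ⟨M, hM⟩ h
      exact absurd (Subtype.ext (funext fun q => hM.zero_off q (by simp))) h
  | succ t =>
    have ht : t < t + 1 := by omega
    have h2 := hα t ht
    have hmem := ribbonBox_mem ht (show α t - 2 < α t - 1 by omega)
    rw [show α t - 2 + 1 = α t - 1 by omega, ← partDiag_column] at hmem
    have hblock := boxSum_block hα ht (topSum hα t ht) (fun _ => True)
    simp only [and_true] at hblock
    rw [tsum_monotone_succ]
    refine Eq.trans ?_ (Eq.trans (hblock.symm.trans (boxSum_congr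
      (g' := fun x => (x : ℝ≥0∞)⁻¹ ^ 2) _ hmem ?_)) ?_)
    · congr! 3
    · intro x hx
      have h := tsum_conn_gt hx 0
      simp only [and_self] at h
      have h' : (∑' n : ℕ, if 0 < n then (n : ℝ≥0∞)⁻¹ * conn x n else 0) = (x : ℝ≥0∞)⁻¹ := by
        rw [h, conn_zero_right, mul_one]
      have h'' : (x : ℝ≥0∞) * (∑' n : ℕ, if 0 < n then (n : ℝ≥0∞)⁻¹ * conn x n else 0) = 1 := by
        rw [h', ENNReal.mul_inv_cancel (by exact_mod_cast hx.ne') (ENNReal.natCast_ne_top x)]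
      conv_rhs => rw [← mul_one ((x : ℝ≥0∞)⁻¹ ^ 2), ← h'']
    · unfold boxSum
      rw [← partDiag_full]
      refine tsum_congr fun M => ?_
      rw [← Finset.prod_erase_mul _ _ hmem, dualExp_ribbonBox ht (by omega), if_pos rfl]

/-! ### Passage to complex series -/

/-- No summability is needed: if the sum is infinite, both sides are zero. -/
lemma tsum_complex_eq {ι : Type*} (F : ι → ℝ≥0∞) (G : ι → ℂ) (hF : ∀ i, F i ≠ ⊤)
    (h : ∀ i, G i = ((F i).toReal : ℂ)) : ∑' i, G i = ((∑' i, F i).toReal : ℂ) := by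
  rw [ENNReal.tsum_toReal_eq hF, Complex.ofReal_tsum]
  exact tsum_congr h

lemma prod_cpow_eq {ι : Type*} (s : Finset ι) (x k : ι → ℕ) (z : ι → ℂ) (hz : ∀ i, z i = k i) :
    ∏ i ∈ s, (x i : ℂ) ^ (-(z i)) = ((∏ i ∈ s, (x i : ℝ≥0∞)⁻¹ ^ k i).toReal : ℂ) := by
  rw [ENNReal.toReal_prod, Complex.ofReal_prod]
  refine Finset.prod_congr rfl fun i _ => ?_
  rw [hz, Complex.cpow_neg, Complex.cpow_natCast]
  simp

lemma prod_inv_pow_ne_top {ι : Type*} (s : Finset ι) (x k : ι → ℕ) (hx : ∀ i ∈ s, 0 < x i) :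
    ∏ i ∈ s, (x i : ℝ≥0∞)⁻¹ ^ k i ≠ ⊤ := by
  refine ENNReal.prod_ne_top fun i hi => ENNReal.pow_ne_top ?_
  rw [ENNReal.inv_ne_top]
  exact_mod_cast (hx i hi).ne'

end SMZ

/-- Duality for multiple zeta-star values: for `α_1,…,α_p ≥ 2`, the value `ζ⋆(α_1,…,α_p)`
equals the Schur multiple zeta value of the dual ribbon with entries `1` except for the
entry `2` at the bottom of every column. -/
theorem mzvStar_eq_schurZeta_dual_ribbon
    (p : ℕ) (α : ℕ → ℕ) (hα : ∀ i < p, 2 ≤ α i) :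
    SMZ.mzvStar (fun i : Fin p => ((α (i : ℕ) : ℕ) : ℂ)) =
      SMZ.schurZetaOn (SMZ.dualDiag p α) (SMZ.dualFill p α) := by
  have h1 := SMZ.tsum_complex_eq _ _ (fun f : {f : Fin p → ℕ // Monotone f ∧ ∀ i, 0 < f i} =>
      SMZ.prod_inv_pow_ne_top Finset.univ f.1 (fun i : Fin p => α i) fun i _ => f.2.2 i)
    (fun f => SMZ.prod_cpow_eq Finset.univ f.1 (fun i : Fin p => α i)
      (fun i : Fin p => ((α (i : ℕ) : ℕ) : ℂ)) fun i => rfl)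
  have h2 := SMZ.tsum_complex_eq _ _ (fun M : {m // SMZ.IsSSYTOn (SMZ.dualDiag p α) m} =>
      SMZ.prod_inv_pow_ne_top _ M.1 (SMZ.dualExp p α) M.2.pos)
    (fun M => SMZ.prod_cpow_eq (SMZ.dualDiag p α) M.1 (SMZ.dualExp p α) (SMZ.dualFill p α)
      fun b => by simp only [SMZ.dualFill, SMZ.dualExp]; split_ifs <;> simp)
  rw [SMZ.tsum_star_eq_tsum_ribbon p α hα] at h1
  exact h1.trans h2.symm
end
end
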